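/- arXiv:1301.2687 — 7 statements merged into one kernel-verified Lean document; each statement's English description precedes it below -/
import Mathlib

section
/- For every integer n ≥ 3, every N ∈ ℕ, every λ, μ ∈ ℂ with λ, μ ∉ {m − n/2 : m ∈ ℕ}, and every l ∈ {1,…,n}, the polynomial Φ(p_N(λ,μ)) ∈ ℂ[ξ₁,…,ξ_n,ν₁,…,ν_n] is annihilated by the operator P_l(λ,μ), i.e. P_l(λ,μ)(Φ(p_N(λ,μ))) = 0. (This is the singular-vector/bilinear-operator property: the polynomial Φ(p_N) is the Fourier image of the singular vector of homogeneity 2N generating the summand of weight λ+μ−2N in the diagonal branching of the tensor product of two scalar generalized Verma modules for so(n+1,1,ℝ).) -/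
/-!
On functions of the invariants `r, s, t`, the chain rule gives
`P_l(Φ f) = ξ_l Φ(D f) + ν_l Φ(D' f)` with second-order operators `D`, `D'` in `r, s, t` that are
exchanged by `s ↔ t`, `λ ↔ μ` (`Pop_Phi`). For `f = Σ A_{i,j} s^i t^j r^{N-i-j}`, the equation
`D f = 0` is a three-term recurrence between `A_{i+1,j}`, `A_{i,j}`, `A_{i,j-1}` (`DD_eq_zero`), and
`D' f = 0` is the mirrored recurrence.

Put `x = λ + n/2 - 1`, `y = μ + n/2 - 1`, `L = λ - N + 1`, `M = μ - N + 1`. Then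
`A_{i,j} = (-1)^{i+j} (-N)_{i+j} / (2^{i+j} i! j! (-x)_i (-y)_j) · c_{i,j}` with
`c_{i,j} = Σ_m m! C(i,m) C(j,m) (i-m-x)_m (M)_{i-m} (L-i+m)_{j-m}`, and the recurrences become
`c_{i,j+1} = (L+j-i) c_{i,j} + i (i-1-x) c_{i-1,j}` and
`c_{i+1,j} = (M+i-j) c_{i,j} + j (j-1-y) c_{i,j-1}`.
The former holds summand by summand (`cc_succ_right`); the latter follows from it by induction on
`j`, thanks to `x - y = L - M` (`cc_succ_left`). The two recurrences also force the symmetry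
`c_{i,j}(λ,μ) = c_{j,i}(μ,λ)` (`cc_symm`), so the formula for `A_{i,j}` is valid for all `i, j` and
the convention used for `i > j` is consistent. The conditions on `λ` and `μ` say that no
denominator vanishes.
-/


open MvPolynomial Finset

noncomputable section

/-- Pochhammer symbol `(x)_l = x (x+1) ⋯ (x+l-1)`. -/
def pk (x : ℂ) (l : ℕ) : ℂ := Polynomial.eval x (ascPochhammer ℂ l)

/-- The coefficient `A_{i,j}(λ,μ)` (intended for `i ≤ j`). -/
def A (n N : ℕ) (lam mu : ℂ) (i j : ℕ) : ℂ :=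
  ((-1 : ℂ) ^ (i + j) * pk (-(N : ℂ)) (i + j) * pk (lam - N + 1) (j - i)) /
      ((2 : ℂ) ^ (i + j) * (Nat.factorial i : ℂ) * (Nat.factorial j : ℂ) *
        pk (1 - (n : ℂ) / 2 - mu) j * pk (lam + (n : ℂ) / 2 - i) i) *
    ∑ k ∈ Finset.range (i + 1),
      (-1 : ℂ) ^ k * (Nat.choose i k : ℂ) * pk ((j : ℂ) - i + 1 + k) (i - k) *
        pk (lam + (n : ℂ) / 2 - i) (i - k) * pk (mu - (N : ℂ) + 1) k *
        pk (lam - (N : ℂ) + 1 - k) k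

/-- The coefficient family extended by the symmetry convention
`A_{i,j}(λ,μ) = A_{j,i}(μ,λ)` for `i > j`. -/
def Aext (n N : ℕ) (lam mu : ℂ) (i j : ℕ) : ℂ :=
  if i ≤ j then A n N lam mu i j else A n N mu lam j i

/-- The polynomial ring `ℂ[r,s,t]`. -/
abbrev S := MvPolynomial (Fin 3) ℂ

def rr : S := X 0
def ss : S := X 1
def tt : S := X 2

/-- The polynomial `p_N(λ,μ) = Σ_{i+j≤N} A_{i,j}(λ,μ) s^i t^j r^{N-i-j}`. -/
def pN (n N : ℕ) (lam mu : ℂ) : S :=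
  ∑ i ∈ Finset.range (N + 1), ∑ j ∈ Finset.range (N + 1 - i),
    C (Aext n N lam mu i j) * ss ^ i * tt ^ j * rr ^ (N - i - j)

/-- The polynomial ring `ℂ[ξ₁,…,ξ_n,ν₁,…,ν_n]`. -/
abbrev R (n : ℕ) := MvPolynomial (Fin n ⊕ Fin n) ℂ

def ξ (n : ℕ) (l : Fin n) : R n := X (Sum.inl l)
def ν (n : ℕ) (l : Fin n) : R n := X (Sum.inr l)

/-- The algebra homomorphism `Φ : ℂ[r,s,t] → ℂ[ξ,ν]` with
`Φ(r) = Σ ξᵢνᵢ`, `Φ(s) = Σ ξᵢ²`, `Φ(t) = Σ νᵢ²`. -/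
def Phi (n : ℕ) : S →ₐ[ℂ] R n :=
  aeval ![∑ i : Fin n, ξ n i * ν n i, ∑ i : Fin n, ξ n i ^ 2, ∑ i : Fin n, ν n i ^ 2]

def Δξ (n : ℕ) (F : R n) : R n := ∑ i : Fin n, pderiv (Sum.inl i) (pderiv (Sum.inl i) F)
def Δν (n : ℕ) (F : R n) : R n := ∑ i : Fin n, pderiv (Sum.inr i) (pderiv (Sum.inr i) F)
def Eξ (n : ℕ) (F : R n) : R n := ∑ i : Fin n, ξ n i * pderiv (Sum.inl i) F
def Eν (n : ℕ) (F : R n) : R n := ∑ i : Fin n, ν n i * pderiv (Sum.inr i) F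

/-- The operator `P_l(λ,μ) = ½ ξ_l Δ^ξ + (λ−E^ξ)∂_{ξ_l} + ½ ν_l Δ^ν + (μ−E^ν)∂_{ν_l}`. -/
def Pop (n : ℕ) (lam mu : ℂ) (l : Fin n) (F : R n) : R n :=
  C (1 / 2 : ℂ) * ξ n l * Δξ n F +
    (C lam * pderiv (Sum.inl l) F - Eξ n (pderiv (Sum.inl l) F)) +
    C (1 / 2 : ℂ) * ν n l * Δν n F +
    (C mu * pderiv (Sum.inr l) F - Eν n (pderiv (Sum.inr l) F))

/-! ### Pochhammer symbols and the numbers `c_{i,j}` -/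

lemma pk_zero (x : ℂ) : pk x 0 = 1 := by simp [pk]
lemma pk_succ (x : ℂ) (l : ℕ) : pk x (l + 1) = pk x l * (x + l) := by
  simp [pk, ascPochhammer_succ_eval]
lemma pk_add (x : ℂ) (k l : ℕ) : pk x (k + l) = pk x k * pk (x + k) l := by
  induction l with
  | zero => simp [pk_zero]
  | succ l ih => rw [← add_assoc, pk_succ, pk_succ, ih]; push_cast; ring
lemma pk_ne_zero (x : ℂ) (l : ℕ) (h : ∀ m : ℕ, x + m ≠ 0) : pk x l ≠ 0 := by
  induction l with
  | zero => simp [pk_zero]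
  | succ l ih => rw [pk_succ]; exact mul_ne_zero ih (h l)

/-- Reversal of the factors: `(x+1-l)_l = (-1)^l (-x)_l`. -/
lemma pk_reflect (x : ℂ) (l : ℕ) : pk (x + 1 - l) l = (-1) ^ l * pk (-x) l := by
  induction l generalizing x with
  | zero => simp [pk_zero]
  | succ l ih =>
    have h := pk_add (x + 1 - (l + 1 : ℕ)) 1 l
    rw [add_comm 1 l] at h
    rw [h, pk_succ, pk_succ]
    have e : x + 1 - ((l + 1 : ℕ) : ℂ) + (1 : ℕ) = x + 1 - l := by push_cast; ring
    rw [e, ih, pk_zero, pow_succ]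
    push_cast
    ring

lemma pk_neg_nat (N k : ℕ) : (-1 : ℂ) ^ k * pk (-(N : ℂ)) k = (N.descFactorial k : ℂ) := by
  induction k with
  | zero => simp [pk_zero]
  | succ k ih =>
    rw [Nat.descFactorial_succ, pow_succ, pk_succ]
    push_cast
    rw [← ih]
    rcases le_or_gt k N with h | h
    · rw [Nat.cast_sub h]; ring
    · have h0 : (-1 : ℂ) ^ k * pk (-(N : ℂ)) k = 0 := by
        rw [ih, Nat.descFactorial_of_lt h]; simp
      linear_combination (-(-(N : ℂ) + k) - ((N - k : ℕ) : ℂ)) * h0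

/-- The coefficients after removal of all denominators: with `x = λ + n/2 - 1`, `L = λ - N + 1`,
`M = μ - N + 1`,
`c_{i,j} = Σ_m m! C(i,m) C(j,m) (i-m-x)_m (M)_{i-m} (L-i+m)_{j-m}`.
The sum may run over all `m ≤ i`, since `C(j,m) = 0` for `m > j`, and so it makes sense for
`i > j` too. -/
def cc (x L M : ℂ) (i j : ℕ) : ℂ :=
  ∑ m ∈ range (i + 1), (m.factorial : ℂ) * (i.choose m : ℂ) * (j.choose m : ℂ) *
    pk ((i : ℂ) - m - x) m * pk M (i - m) * pk (L - i + m) (j - m)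

lemma cc_zero_left (x L M : ℂ) (j : ℕ) : cc x L M 0 j = pk L j := by
  simp [cc, pk_zero]

lemma cc_zero_right (x L M : ℂ) (i : ℕ) : cc x L M i 0 = pk M i := by
  rw [cc, sum_range_succ']
  simp [pk_zero]

/-- Recurrence in the second index. It holds summand by summand, by Pascal's rule for
`C(j+1,m)`. -/
lemma cc_succ_right (x L M : ℂ) (i j : ℕ) :
    cc x L M (i + 1) (j + 1) =
      (L + j - (i + 1)) * cc x L M (i + 1) j + (i + 1) * (i - x) * cc x L M i j := by
  have key : ∀ m ∈ range (i + 1), (((m + 1).factorial : ℕ) : ℂ) * ((i + 1).choose (m + 1) : ℂ)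
        * ((j + 1).choose (m + 1) : ℂ) *
      pk (((i + 1 : ℕ) : ℂ) - (m + 1 : ℕ) - x) (m + 1) * pk M (i + 1 - (m + 1)) *
        pk (L - (i + 1 : ℕ) + (m + 1 : ℕ)) (j + 1 - (m + 1)) =
      (L + j - (i + 1)) * ((((m + 1).factorial : ℕ) : ℂ) * ((i + 1).choose (m + 1) : ℂ)
        * (j.choose (m + 1) : ℂ) *
      pk (((i + 1 : ℕ) : ℂ) - (m + 1 : ℕ) - x) (m + 1) * pk M (i + 1 - (m + 1)) *
        pk (L - (i + 1 : ℕ) + (m + 1 : ℕ)) (j - (m + 1))) +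
      (i + 1) * (i - x) * ((m.factorial : ℂ) * (i.choose m : ℂ) * (j.choose m : ℂ) *
    pk ((i : ℂ) - m - x) m * pk M (i - m) * pk (L - i + m) (j - m)) := by
    intro m hm
    have e1 : (((m + 1).factorial : ℕ) : ℂ) * ((i + 1).choose (m + 1) : ℂ) =
        (i + 1) * (m.factorial * (i.choose m : ℂ)) := by
      have := Nat.add_one_mul_choose_eq i m
      rw [Nat.factorial_succ]
      have h2 : ((i : ℂ) + 1) * i.choose m = (i + 1).choose (m + 1) * (m + 1) := by
        exact_mod_cast this
      push_cast
      linear_combination (-(m.factorial : ℂ)) * h2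
    have e2 : ((i + 1 : ℕ) : ℂ) - (m + 1 : ℕ) - x = i - m - x := by push_cast; ring
    have e3 : L - ((i + 1 : ℕ) : ℂ) + (m + 1 : ℕ) = L - i + m := by push_cast; ring
    rw [e1, e2, e3, pk_succ, Nat.succ_sub_succ, Nat.succ_sub_succ, Nat.choose_succ_succ]
    have e4 : (j.choose (m + 1) : ℂ) * pk (L - i + m) (j - m) =
        (j.choose (m + 1) : ℂ) * (pk (L - i + m) (j - (m + 1)) * (L + j - (i + 1))) := by
      rcases le_or_gt (m + 1) j with h | h
      · obtain ⟨d, rfl⟩ := Nat.exists_eq_add_of_le h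
        have a1 : m + 1 + d - m = d + 1 := by omega
        have a2 : m + 1 + d - (m + 1) = d := by omega
        rw [a1, a2, pk_succ]; push_cast; ring
      · rw [Nat.choose_eq_zero_of_lt h]; simp
    push_cast
    linear_combination ((i + 1) * (m.factorial * (i.choose m : ℂ)) * pk ((i : ℂ) - m - x) m *
      ((i : ℂ) - m - x + m) * pk M (i - m)) * e4
  conv_lhs => rw [cc, sum_range_succ', sum_congr rfl key, sum_add_distrib, ← mul_sum, ← mul_sum]
  conv_rhs => rw [cc, sum_range_succ']
  rw [cc]
  simp only [Nat.sub_zero, pk_succ _ j]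
  simp
  ring

lemma cc_succ_right_zero (x L M : ℂ) (j : ℕ) :
    cc x L M 0 (j + 1) = (L + j) * cc x L M 0 j := by
  rw [cc_zero_left, cc_zero_left, pk_succ]; ring

/-- Recurrence in the first index. The defect of this identity itself satisfies the recurrence
`cc_succ_right` up to a multiple of `(x - y) - (L - M)`, so it vanishes by induction on `j`. -/
lemma cc_succ_left (x y L M : ℂ) (h : x - y = L - M) (j i : ℕ) :
    cc x L M (i + 1) (j + 1) =
      (M + i - (j + 1)) * cc x L M i (j + 1) + (j + 1) * (j - y) * cc x L M i j := by
  have base : ∀ i, cc x L M (i + 1) 0 = (M + i) * cc x L M i 0 := fun i => by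
    rw [cc_zero_right, cc_zero_right, pk_succ]; ring
  induction j generalizing i with
  | zero =>
    cases i with
    | zero =>
      simp only [cc_succ_right, cc_succ_right_zero, base, Nat.cast_zero]
      linear_combination (-cc x L M 0 0) * h
    | succ i =>
      simp only [cc_succ_right, base, Nat.cast_zero]
      push_cast
      linear_combination (-(M + i) * cc x L M i 0) * h
  | succ j ih =>
    cases i with
    | zero =>
      rw [cc_succ_right _ _ _ 0 (j + 1), ih, cc_succ_right_zero _ _ _ (j + 1),
        cc_succ_right_zero _ _ _ j]
      push_cast
      linear_combination (-(L + j) * cc x L M 0 j) * h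
    | succ i =>
      have h3 := cc_succ_right x L M i j
      rw [cc_succ_right _ _ _ (i + 1) (j + 1), ih (i + 1), cc_succ_right _ _ _ i (j + 1)]
      push_cast at *
      linear_combination (-cc x L M (i+1) (j+1)) * h + ((i:ℂ)+1)*(i-x) * ih i - (j + 1) * (j-y) * h3

/-- The symmetry of the coefficients under `λ ↔ μ`, `i ↔ j`: both sides satisfy the same recurrence
in `i` and have the same values at `i = 0`. -/
lemma cc_symm (x y L M : ℂ) (h : x - y = L - M) (i j : ℕ) :
    cc x L M i j = cc y M L j i := by
  induction i generalizing j with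
  | zero => rw [cc_zero_left, cc_zero_right]
  | succ i ih =>
    cases j with
    | zero => rw [cc_zero_left, cc_zero_right]
    | succ j => rw [cc_succ_left x y L M h, cc_succ_right, ih, ih]

/-! ### The coefficients of `p_N` -/

/-- The coefficients of `p_N` in a form valid for all `i, j`, where `x = λ + n/2 - 1`,
`y = μ + n/2 - 1`, `L = λ - N + 1`, `M = μ - N + 1`. The factor `(-1)^k (-N)_k` is written as the
falling factorial `N (N-1) ⋯ (N-k+1)`. -/
def BB (N : ℕ) (x y L M : ℂ) (i j : ℕ) : ℂ :=
  (N.descFactorial (i + j) : ℂ) /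
    (2 ^ (i + j) * (i.factorial : ℂ) * (j.factorial : ℂ) * pk (-x) i * pk (-y) j) * cc x L M i j

/-- The substitution `m = i - k` turns the sum defining `A` into `cc`. -/
lemma sum_eq_cc (x L M : ℂ) (i j : ℕ) (hij : i ≤ j) :
    pk L (j - i) * ∑ k ∈ range (i + 1),
      (-1 : ℂ) ^ k * (Nat.choose i k : ℂ) * pk ((j : ℂ) - i + 1 + k) (i - k) *
        pk (x + 1 - i) (i - k) * pk M k * pk (L - k) k = (-1) ^ i * cc x L M i j := by
  rw [cc, ← sum_range_reflect, mul_sum, mul_sum]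
  refine sum_congr rfl fun m hm => ?_
  obtain ⟨k, rfl⟩ := Nat.exists_eq_add_of_le (Nat.lt_succ_iff.mp (mem_range.mp hm))
  obtain ⟨d, rfl⟩ := Nat.exists_eq_add_of_le hij
  have a1 : m + k + 1 - 1 - m = k := by omega
  have a2 : m + k - k = m := by omega
  have a3 : m + k - m = k := by omega
  have a4 : m + k + d - m = k + d := by omega
  have a5 : m + k + d - (m + k) = d := by omega
  rw [a1, a2, a3, a4, a5]
  have e1 : pk (((m + k + d : ℕ) : ℂ) - (m + k : ℕ) + 1 + k) m =
      (m.factorial : ℂ) * ((m + k + d).choose m : ℂ) := by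
    have h := pk_reflect ((m + k + d : ℕ) : ℂ) m
    rw [pk_neg_nat, Nat.descFactorial_eq_factorial_mul_choose] at h
    rw [← Nat.cast_mul, ← h]
    congr 1; push_cast; ring
  have e2 : pk (x + 1 - (m + k : ℕ)) m = (-1) ^ m * pk (((m + k : ℕ) : ℂ) - m - x) m := by
    have h := pk_reflect (x - k) m
    rw [show x + 1 - ((m + k : ℕ) : ℂ) = x - k + 1 - m by push_cast; ring, h]
    congr 2; push_cast; ring
  have e3 : pk (L - (m + k : ℕ) + m) (k + d) = pk (L - k) k * pk L d := by
    rw [pk_add, show L - ((m + k : ℕ) : ℂ) + m = L - k by push_cast; ring, sub_add_cancel]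
  have e4 : (m + k).choose k = (m + k).choose m := by rw [Nat.choose_symm_add]
  rw [e1, e2, e3, e4, pow_add]
  ring

lemma A_eq_BB (n N : ℕ) (lam mu : ℂ) (i j : ℕ) (hij : i ≤ j) :
    A n N lam mu i j =
      BB N (lam + n / 2 - 1) (mu + n / 2 - 1) (lam - N + 1) (mu - N + 1) i j := by
  have h := sum_eq_cc (lam + n / 2 - 1) (lam - N + 1) (mu - N + 1) i j hij
  rw [show lam + (n : ℂ) / 2 - 1 + 1 - i = lam + n / 2 - i by ring] at h
  have hx := pk_reflect (lam + n / 2 - 1) i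
  rw [show lam + (n : ℂ) / 2 - 1 + 1 - i = lam + n / 2 - i by ring] at hx
  rw [A, BB, div_mul_eq_mul_div, mul_assoc _ (pk _ (j - i)), h, pk_neg_nat, hx,
    show 1 - (n : ℂ) / 2 - mu = -(mu + n / 2 - 1) by ring]
  have h1 : ((-1 : ℂ) ^ i) ≠ 0 := by simp
  rw [show (2 : ℂ) ^ (i + j) * (i.factorial : ℂ) * (j.factorial : ℂ) *
    pk (-(mu + n / 2 - 1)) j * ((-1) ^ i * pk (-(lam + n / 2 - 1)) i) = (-1) ^ i *
    (2 ^ (i + j) * (i.factorial : ℂ) * (j.factorial : ℂ) * pk (-(lam + n / 2 - 1)) i *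
      pk (-(mu + n / 2 - 1)) j) by ring, mul_left_comm, mul_div_mul_left _ _ h1]
  ring

lemma BB_symm (N : ℕ) (x y L M : ℂ) (h : x - y = L - M) (i j : ℕ) :
    BB N x y L M i j = BB N y x M L j i := by
  rw [BB, BB, cc_symm x y L M h, add_comm i j]
  congr 2
  ring

lemma Aext_eq_BB (n N : ℕ) (lam mu : ℂ) (i j : ℕ) :
    Aext n N lam mu i j =
      BB N (lam + n / 2 - 1) (mu + n / 2 - 1) (lam - N + 1) (mu - N + 1) i j := by
  rw [Aext]
  split_ifs with hij
  · exact A_eq_BB n N lam mu i j hij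
  · rw [A_eq_BB n N mu lam j i (by omega), BB_symm]
    ring

lemma descFactorial_cast_succ (N k : ℕ) :
    (N.descFactorial (k + 1) : ℂ) = (N - k) * (N.descFactorial k : ℂ) := by
  rw [← pk_neg_nat, ← pk_neg_nat, pk_succ, pow_succ]; ring

lemma BB_eq_zero (N : ℕ) (x y L M : ℂ) (i j : ℕ) (h : N < i + j) : BB N x y L M i j = 0 := by
  rw [BB, Nat.descFactorial_of_lt h]; simp

/-- Recurrence of the coefficients in the first index, at `j = 0`. -/
lemma BB_rec_zero (N : ℕ) (x y L M : ℂ) (hx : ∀ m : ℕ, x ≠ m) (i : ℕ) :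
    2 * (i + 1) * (x - i) * BB N x y L M (i + 1) 0 + (N - i) * (M + i) * BB N x y L M i 0 = 0 := by
  have h0 : pk (-x) i ≠ 0 := pk_ne_zero _ _ fun m => by
    rw [neg_add_eq_sub]; exact sub_ne_zero.mpr (hx m).symm
  have h1 : -x + i ≠ 0 := by
    rw [neg_add_eq_sub]; exact sub_ne_zero.mpr (hx i).symm
  have h2 : (i.factorial : ℂ) ≠ 0 := by exact_mod_cast i.factorial_ne_zero
  have h3 : (i : ℂ) + 1 ≠ 0 := by exact_mod_cast i.succ_ne_zero
  simp only [BB, add_zero, cc_zero_right, pk_succ, pk_zero, descFactorial_cast_succ,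
    Nat.factorial_succ, pow_succ]
  push_cast
  field_simp
  ring

/-- Recurrence of the coefficients in the first index, at `j + 1`. -/
lemma BB_rec_succ (N : ℕ) (x y L M : ℂ) (h : x - y = L - M) (hx : ∀ m : ℕ, x ≠ m)
    (hy : ∀ m : ℕ, y ≠ m) (i j : ℕ) :
    2 * (i + 1) * (x - i) * BB N x y L M (i + 1) (j + 1)
      + (N - i - (j + 1)) * (M + i - (j + 1)) * BB N x y L M i (j + 1)
      + 1 / 2 * (N - i - (j + 1)) * (N - i - j) * BB N x y L M i j = 0 := by
  have h0 : pk (-x) i ≠ 0 := pk_ne_zero _ _ fun m => by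
    rw [neg_add_eq_sub]; exact sub_ne_zero.mpr (hx m).symm
  have h1 : -x + i ≠ 0 := by
    rw [neg_add_eq_sub]; exact sub_ne_zero.mpr (hx i).symm
  have h0' : pk (-y) j ≠ 0 := pk_ne_zero _ _ fun m => by
    rw [neg_add_eq_sub]; exact sub_ne_zero.mpr (hy m).symm
  have h1' : -y + j ≠ 0 := by
    rw [neg_add_eq_sub]; exact sub_ne_zero.mpr (hy j).symm
  have h2 : (i.factorial : ℂ) ≠ 0 := by exact_mod_cast i.factorial_ne_zero
  have h3 : (i : ℂ) + 1 ≠ 0 := by exact_mod_cast i.succ_ne_zero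
  have h2' : (j.factorial : ℂ) ≠ 0 := by exact_mod_cast j.factorial_ne_zero
  have h3' : (j : ℂ) + 1 ≠ 0 := by exact_mod_cast j.succ_ne_zero
  have e1 : i + 1 + (j + 1) = i + j + 1 + 1 := by ring
  have e2 : i + (j + 1) = i + j + 1 := by ring
  simp only [BB, e1, e2, cc_succ_left x y L M h, pk_succ, descFactorial_cast_succ,
    Nat.factorial_succ, pow_succ]
  push_cast
  field_simp
  ring

/-! ### The operators in the invariant coordinates -/

lemma pderiv_comm_three (a b : Fin 3) (f : S) : pderiv a (pderiv b f) = pderiv b (pderiv a f) := by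
  have h : ⁅(pderiv a : Derivation ℂ S S), (pderiv b : Derivation ℂ S S)⁆ = 0 := by
    refine MvPolynomial.derivation_ext fun i => ?_
    rw [Derivation.commutator_apply]
    simp [pderiv_X, Pi.single_apply, apply_ite]
  have := congrArg (fun D : Derivation ℂ S S => D f) h
  simpa [Derivation.commutator_apply, sub_eq_zero] using this

/-- Chain rule for `∂_{ξ_l}` on functions of `r, s, t`. -/
lemma pderiv_inl_Phi (n : ℕ) (l : Fin n) (f : S) :
    pderiv (Sum.inl l) (Phi n f) =
      ν n l * Phi n (pderiv 0 f) + 2 * ξ n l * Phi n (pderiv 1 f) := by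
  induction f using MvPolynomial.induction_on with
  | C a => simp [Phi, algebraMap_eq]
  | add p q hp hq => simp only [map_add, hp, hq]; ring
  | mul_X p i hp =>
    have hX : pderiv (Sum.inl l) (Phi n (X i)) =
        ν n l * Phi n (pderiv 0 (X i)) + 2 * ξ n l * Phi n (pderiv 1 (X i)) := by
      fin_cases i <;>
        simp [Phi, ξ, ν, pderiv_X, Pi.single_apply]
    rw [map_mul, pderiv_mul, hp, hX, pderiv_mul, pderiv_mul]
    simp only [map_add, map_mul]
    ring

/-- Chain rule for `∂_{ν_l}` on functions of `r, s, t`. -/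
lemma pderiv_inr_Phi (n : ℕ) (l : Fin n) (f : S) :
    pderiv (Sum.inr l) (Phi n f) =
      ξ n l * Phi n (pderiv 0 f) + 2 * ν n l * Phi n (pderiv 2 f) := by
  induction f using MvPolynomial.induction_on with
  | C a => simp [Phi, algebraMap_eq]
  | add p q hp hq => simp only [map_add, hp, hq]; ring
  | mul_X p i hp =>
    have hX : pderiv (Sum.inr l) (Phi n (X i)) =
        ξ n l * Phi n (pderiv 0 (X i)) + 2 * ν n l * Phi n (pderiv 2 (X i)) := by
      fin_cases i <;>
        simp [Phi, ξ, ν, pderiv_X, Pi.single_apply]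
    rw [map_mul, pderiv_mul, hp, hX, pderiv_mul, pderiv_mul]
    simp only [map_add, map_mul]
    ring

lemma Phi_X0 (n : ℕ) : Phi n (X 0) = ∑ i, ξ n i * ν n i := by simp [Phi]
lemma Phi_X1 (n : ℕ) : Phi n (X 1) = ∑ i, ξ n i ^ 2 := by simp [Phi]
lemma Phi_X2 (n : ℕ) : Phi n (X 2) = ∑ i, ν n i ^ 2 := by simp [Phi]

lemma Eξ_Phi (n : ℕ) (g : S) :
    Eξ n (Phi n g) = Phi n (X 0 * pderiv 0 g + 2 * X 1 * pderiv 1 g) := by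
  simp only [Eξ, pderiv_inl_Phi, map_add, map_mul, Phi_X0, Phi_X1, map_ofNat, sum_mul, mul_sum,
    ← sum_add_distrib]
  exact sum_congr rfl fun i _ => by ring

lemma Eν_Phi (n : ℕ) (g : S) :
    Eν n (Phi n g) = Phi n (X 0 * pderiv 0 g + 2 * X 2 * pderiv 2 g) := by
  simp only [Eν, pderiv_inr_Phi, map_add, map_mul, Phi_X0, Phi_X2, map_ofNat, sum_mul, mul_sum,
    ← sum_add_distrib]
  exact sum_congr rfl fun i _ => by ring

lemma Eξ_add (n : ℕ) (f g : R n) : Eξ n (f + g) = Eξ n f + Eξ n g := by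
  simp [Eξ, mul_add, sum_add_distrib]
lemma Eν_add (n : ℕ) (f g : R n) : Eν n (f + g) = Eν n f + Eν n g := by
  simp [Eν, mul_add, sum_add_distrib]
lemma Eξ_mul (n : ℕ) (f g : R n) : Eξ n (f * g) = Eξ n f * g + f * Eξ n g := by
  simp only [Eξ, pderiv_mul, mul_sum, sum_mul, ← sum_add_distrib]
  exact sum_congr rfl fun i _ => by ring
lemma Eν_mul (n : ℕ) (f g : R n) : Eν n (f * g) = Eν n f * g + f * Eν n g := by
  simp only [Eν, pderiv_mul, mul_sum, sum_mul, ← sum_add_distrib]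
  exact sum_congr rfl fun i _ => by ring
lemma Eξ_ξ (n : ℕ) (l : Fin n) : Eξ n (ξ n l) = ξ n l := by
  simp [Eξ, ξ, pderiv_X, Pi.single_apply]
lemma Eξ_ν (n : ℕ) (l : Fin n) : Eξ n (ν n l) = 0 := by
  simp [Eξ, ν, pderiv_X]
lemma Eν_ν (n : ℕ) (l : Fin n) : Eν n (ν n l) = ν n l := by
  simp [Eν, ν, pderiv_X, Pi.single_apply]
lemma Eν_ξ (n : ℕ) (l : Fin n) : Eν n (ξ n l) = 0 := by
  simp [Eν, ξ, pderiv_X]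
lemma Eξ_two (n : ℕ) : Eξ n 2 = 0 := by
  simp [Eξ, show (2 : R n) = C 2 from rfl]
lemma Eν_two (n : ℕ) : Eν n 2 = 0 := by
  simp [Eν, show (2 : R n) = C 2 from rfl]

lemma Δξ_Phi (n : ℕ) (f : S) :
    Δξ n (Phi n f) = Phi n (X 2 * pderiv 0 (pderiv 0 f) + 4 * X 0 * pderiv 0 (pderiv 1 f)
      + 4 * X 1 * pderiv 1 (pderiv 1 f) + 2 * (n : S) * pderiv 1 f) := by
  have hn : (n : R n) = ∑ i : Fin n, 1 := by simp
  have h : ∀ i : Fin n, pderiv (Sum.inl i) (ν n i) = 0 := fun i => by simp [ν, pderiv_X]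
  have h' : ∀ i : Fin n, pderiv (Sum.inl i) (ξ n i) = 1 := fun i => by simp [ξ]
  have h2 : ∀ i : Fin n, pderiv (Sum.inl i) (2 : R n) = 0 := fun i => by
    simp [show (2 : R n) = C 2 from rfl]
  simp only [Δξ, pderiv_inl_Phi, map_add, map_mul, Phi_X0, Phi_X1, Phi_X2, map_ofNat, map_natCast,
    hn, sum_mul, mul_sum, ← sum_add_distrib, pderiv_mul, h, h', h2, pderiv_comm_three 1 0]
  exact sum_congr rfl fun i _ => by ring

lemma Δν_Phi (n : ℕ) (f : S) :
    Δν n (Phi n f) = Phi n (X 1 * pderiv 0 (pderiv 0 f) + 4 * X 0 * pderiv 0 (pderiv 2 f)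
      + 4 * X 2 * pderiv 2 (pderiv 2 f) + 2 * (n : S) * pderiv 2 f) := by
  have hn : (n : R n) = ∑ i : Fin n, 1 := by simp
  have h : ∀ i : Fin n, pderiv (Sum.inr i) (ξ n i) = 0 := fun i => by simp [ξ, pderiv_X]
  have h' : ∀ i : Fin n, pderiv (Sum.inr i) (ν n i) = 1 := fun i => by simp [ν]
  have h2 : ∀ i : Fin n, pderiv (Sum.inr i) (2 : R n) = 0 := fun i => by
    simp [show (2 : R n) = C 2 from rfl]
  simp only [Δν, pderiv_inr_Phi, map_add, map_mul, Phi_X0, Phi_X1, Phi_X2, map_ofNat, map_natCast,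
    hn, sum_mul, mul_sum, ← sum_add_distrib, pderiv_mul, h, h', h2, pderiv_comm_three 2 0]
  exact sum_congr rfl fun i _ => by ring

/-- The radial part of `P_l`: for `a = s`, `b = t` (variables `X 1`, `X 2`) this is
`½ t ∂_r² - 2 s ∂_s² + (n + 2λ - 2) ∂_s + μ ∂_r - r ∂_r² - 2 t ∂_t ∂_r`, and the exchanged pair
gives the operator with `s ↔ t`. -/
def DD (n : ℕ) (lam mu : ℂ) (a b : Fin 3) (f : S) : S :=
  C (1 / 2) * X b * pderiv 0 (pderiv 0 f) - 2 * X a * pderiv a (pderiv a f)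
    + C (n + 2 * lam - 2) * pderiv a f + C mu * pderiv 0 f
    - X 0 * pderiv 0 (pderiv 0 f) - 2 * X b * pderiv b (pderiv 0 f)

/-- `P_l` in the invariant coordinates `r, s, t`. -/
lemma Pop_Phi (n : ℕ) (lam mu : ℂ) (l : Fin n) (f : S) :
    Pop n lam mu l (Phi n f) =
      ξ n l * Phi n (DD n lam mu 1 2 f) + ν n l * Phi n (DD n mu lam 2 1 f) := by
  have hC : ∀ a : ℂ, Phi n (C a) = C a := fun a => by simp [Phi, algebraMap_eq]
  have h2 : (C (1 / 2) : R n) * 2 = 1 := by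
    rw [show (2 : R n) = C 2 from rfl, ← C_mul]; norm_num
  simp only [Pop, DD, Δξ_Phi, Δν_Phi, pderiv_inl_Phi, pderiv_inr_Phi, Eξ_add, Eν_add, Eξ_mul,
    Eν_mul, Eξ_ξ, Eξ_ν, Eν_ν, Eν_ξ, Eξ_two, Eν_two, Eξ_Phi, Eν_Phi, map_add, map_sub, map_mul,
    map_ofNat, map_natCast, hC, pderiv_comm_three 1 0, pderiv_comm_three 2 0]
  linear_combination (ξ n l * (2 * Phi n (X 0) * Phi n (pderiv 0 (pderiv 1 f))
      + 2 * Phi n (X 1) * Phi n (pderiv 1 (pderiv 1 f)) + (n : R n) * Phi n (pderiv 1 f))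
    + ν n l * (2 * Phi n (X 0) * Phi n (pderiv 0 (pderiv 2 f))
      + 2 * Phi n (X 2) * Phi n (pderiv 2 (pderiv 2 f)) + (n : R n) * Phi n (pderiv 2 f))) * h2

lemma DD_sum (n : ℕ) (lam mu : ℂ) (a b : Fin 3) {ι : Type} (s : Finset ι) (f : ι → S) :
    DD n lam mu a b (∑ i ∈ s, f i) = ∑ i ∈ s, DD n lam mu a b (f i) := by
  simp only [DD, map_sum, mul_sum, ← sum_add_distrib, ← sum_sub_distrib]

/-- `DD` on a monomial. The exponents `m - 2`, `i - 1`, `m - 1` may truncate, but then the scalar in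
front is zero. -/
lemma DD_term (n : ℕ) (lam mu : ℂ) (a b : Fin 3) (ha : a ≠ 0) (hb : b ≠ 0) (hab : a ≠ b)
    (c : ℂ) (i j m : ℕ) :
    DD n lam mu a b (C c * X a ^ i * X b ^ j * X 0 ^ m) =
      C (1 / 2 * c * m * (m - 1)) * (X a ^ i * X b ^ (j + 1) * X 0 ^ (m - 2))
      + C (c * i * (n + 2 * lam - 2 * i)) * (X a ^ (i - 1) * X b ^ j * X 0 ^ m)
      + C (c * m * (mu - (m - 1) - 2 * j)) * (X a ^ i * X b ^ j * X 0 ^ (m - 1)) := by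
  have p0 : ∀ (c : ℂ) (i j m : ℕ), pderiv 0 (C c * X a ^ i * X b ^ j * X 0 ^ m : S) =
      C (c * m) * X a ^ i * X b ^ j * X 0 ^ (m - 1) := fun c i j m => by
    simp only [pderiv_mul, pderiv_pow, pderiv_C, pderiv_X_self, pderiv_X_of_ne ha,
      pderiv_X_of_ne hb, map_mul, map_natCast]
    ring
  have pa : ∀ (c : ℂ) (i j m : ℕ), pderiv a (C c * X a ^ i * X b ^ j * X 0 ^ m : S) =
      C (c * i) * X a ^ (i - 1) * X b ^ j * X 0 ^ m := fun c i j m => by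
    simp only [pderiv_mul, pderiv_pow, pderiv_C, pderiv_X_self, pderiv_X_of_ne ha.symm,
      pderiv_X_of_ne hab.symm, map_mul, map_natCast]
    ring
  have pb : ∀ (c : ℂ) (i j m : ℕ), pderiv b (C c * X a ^ i * X b ^ j * X 0 ^ m : S) =
      C (c * j) * X a ^ i * X b ^ (j - 1) * X 0 ^ m := fun c i j m => by
    simp only [pderiv_mul, pderiv_pow, pderiv_C, pderiv_X_self, pderiv_X_of_ne hb.symm,
      pderiv_X_of_ne hab, map_mul, map_natCast]
    ring
  have e : ∀ (v : Fin 3) (k : ℕ), (k : S) * ((X v : S) * (X v : S) ^ (k - 1)) = (k : S) * (X v : S) ^ k := by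
    intro v k
    cases k with
    | zero => simp
    | succ k => rw [Nat.add_sub_cancel, pow_succ']
  -- `k ((k - 1 : ℕ)) = k (k - 1)` also at `k = 0`
  have e' : ∀ k : ℕ, (k : S) * ((k - 1 : ℕ) : S) = k * (k - 1) := by
    intro k
    cases k with
    | zero => simp
    | succ k => simp
  have e2 : ∀ (v : Fin 3) (k : ℕ), (k : S) * (((k - 1 : ℕ) : S) * ((X v : S) * (X v : S) ^ (k - 1 - 1))) =
      (k : S) * ((k : S) - 1) * (X v : S) ^ (k - 1) := by
    intro v k
    rw [e v (k - 1), ← mul_assoc, e']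
  simp only [DD, p0, pa, pb]
  simp only [map_mul, map_add, map_sub, map_natCast, map_ofNat, map_one,
    show m - 2 = m - 1 - 1 from rfl]
  linear_combination
    C (1 / 2) * C c * X a ^ i * X b ^ (j + 1) * X 0 ^ (m - 1 - 1) * e' m
    - 2 * C c * X b ^ j * X 0 ^ m * e2 a i
    - C c * X a ^ i * X b ^ j * e2 0 m
    - 2 * C c * m * X a ^ i * X 0 ^ (m - 1) * e b j

/-- If the coefficients `B i j` vanish for `i + j > N` and satisfy the three-term recurrence in the
first index (`h0` is its boundary case `j = 0`), then `DD` kills the homogeneous polynomial with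
these coefficients. After reindexing, the recurrence is the coefficient of `G i j` in the image. -/
lemma DD_eq_zero (n N : ℕ) (lam mu : ℂ) (a b : Fin 3) (ha : a ≠ 0) (hb : b ≠ 0) (hab : a ≠ b)
    (B : ℕ → ℕ → ℂ) (hB : ∀ i j, N < i + j → B i j = 0)
    (h0 : ∀ i : ℕ, 2 * (i + 1) * (lam + n / 2 - 1 - i) * B (i + 1) 0
      + (N - i) * (mu - N + 1 + i) * B i 0 = 0)
    (h1 : ∀ i j : ℕ, 2 * (i + 1) * (lam + n / 2 - 1 - i) * B (i + 1) (j + 1)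
      + (N - i - (j + 1)) * (mu - N + 1 + i - (j + 1)) * B i (j + 1)
      + 1 / 2 * (N - i - (j + 1)) * (N - i - j) * B i j = 0) :
    DD n lam mu a b (∑ i ∈ range (N + 1), ∑ j ∈ range (N + 1),
      C (B i j) * X a ^ i * X b ^ j * X 0 ^ (N - i - j)) = 0 := by
  -- `G i j` are the monomials of the image; `T1`, `T2`, `T3` collect the contributions of
  -- `B i (j - 1)`, `B i j` (to `G (i - 1) j`) and `B i j` (to `G i j`). The `if` makes
  -- `B i (-1)` zero.
  let G : ℕ → ℕ → S := fun i j => X a ^ i * X b ^ j * X 0 ^ (N - 1 - i - j)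
  let T1 : ℕ → ℕ → S := fun i j =>
    C (1 / 2 * (N - i - j) * (N - i - (j - 1)) * (if j = 0 then 0 else B i (j - 1))) * G i j
  let T2 : ℕ → ℕ → S := fun i j =>
    C (2 * i * (lam + n / 2 - i) * B i j) * G (i - 1) j
  let T3 : ℕ → ℕ → S := fun i j =>
    C ((N - i - j) * (mu - N + 1 + i - j) * B i j) * G i j
  have hcast : ∀ i j : ℕ, B i j * ((N - i - j : ℕ) : ℂ) = B i j * (N - i - j) := by
    intro i j
    rcases le_or_gt (i + j) N with h | h
    · rw [Nat.sub_sub, Nat.cast_sub h]; push_cast; ring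
    · rw [hB i j h]; simp
  have hterm : ∀ i j : ℕ, DD n lam mu a b (C (B i j) * X a ^ i * X b ^ j * X 0 ^ (N - i - j)) =
      T1 i (j + 1) + T2 i j + T3 i j := by
    intro i j
    rw [DD_term n lam mu a b ha hb hab]
    have g1 : G i (j + 1) = X a ^ i * X b ^ (j + 1) * X 0 ^ (N - i - j - 2) := by
      simp only [G]; congr 2; omega
    have g3 : G i j = X a ^ i * X b ^ j * X 0 ^ (N - i - j - 1) := by
      simp only [G]; congr 2; omega
    congr 1
    · congr 1
      · simp only [T1, g1]
        congr 2
        simp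
        linear_combination (1 / 2 * ((N - i - j : ℕ) - 1 : ℂ) + 1 / 2 * (N - i - j)) * hcast i j
      · simp only [T2]
        cases i with
        | zero => simp
        | succ i =>
          have g2 : G (i + 1 - 1) j = X a ^ (i + 1 - 1) * X b ^ j * X 0 ^ (N - (i + 1) - j) := by
            simp only [G]; congr 2; omega
          rw [g2]
          congr 2
          ring
    · simp only [T3, g3]
      congr 2
      linear_combination (mu - ((N - i - j : ℕ) - 1 : ℂ) - 2 * j - (N - i - j)) * hcast i j
  have s1 : ∀ i, ∑ j ∈ range (N + 1), T1 i (j + 1) = ∑ j ∈ range (N + 1), T1 i j := by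
    intro i
    have z0 : T1 i 0 = 0 := by simp [T1]
    have z1 : T1 i (N + 1) = 0 := by
      rcases Nat.eq_zero_or_pos i with h | h
      · subst h; simp [T1]
      · simp [T1, hB i N (by omega)]
    have := sum_range_succ' (T1 i) (N + 1)
    rw [sum_range_succ, z0, z1, add_zero, add_zero] at this
    exact this.symm
  have s2 : ∑ i ∈ range (N + 1), ∑ j ∈ range (N + 1), T2 i j =
      ∑ i ∈ range (N + 1), ∑ j ∈ range (N + 1), T2 (i + 1) j := by
    have z0 : ∑ j ∈ range (N + 1), T2 0 j = 0 := by simp [T2]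
    have z1 : ∑ j ∈ range (N + 1), T2 (N + 1) j = 0 :=
      sum_eq_zero fun j _ => by simp [T2, hB (N + 1) j (by omega)]
    have := sum_range_succ' (fun i => ∑ j ∈ range (N + 1), T2 i j) (N + 1)
    rw [sum_range_succ, z0, z1, add_zero, add_zero] at this
    exact this
  simp only [DD_sum, hterm, sum_add_distrib, s1, s2]
  simp only [← sum_add_distrib]
  refine sum_eq_zero fun i _ => sum_eq_zero fun j _ => ?_
  simp only [T1, T2, T3, Nat.add_sub_cancel, ← add_mul, ← C_add]
  convert zero_mul (G i j)
  rw [← C_0]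
  congr 1
  cases j with
  | zero => 
    have := h0 i
    simp
    linear_combination this
  | succ j =>
    have := h1 i j
    simp
    linear_combination this

/-- the Fourier image `Φ(p_N(λ,μ))` of the singular vector is annihilated
by every operator `P_l(λ,μ)`, `l = 1,…,n`. -/
theorem statement0 (n : ℕ) (hn : 3 ≤ n) (N : ℕ) (lam mu : ℂ)
    (hlam : ∀ m : ℕ, lam ≠ (m : ℂ) - (n : ℂ) / 2)
    (hmu : ∀ m : ℕ, mu ≠ (m : ℂ) - (n : ℂ) / 2) (l : Fin n) :
    Pop n lam mu l (Phi n (pN n N lam mu)) = 0 := by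
  have hx : ∀ m : ℕ, lam + n / 2 - 1 ≠ m := fun m h => hlam (m + 1) (by
    push_cast; linear_combination h)
  have hy : ∀ m : ℕ, mu + n / 2 - 1 ≠ m := fun m h => hmu (m + 1) (by
    push_cast; linear_combination h)
  have hA := Aext_eq_BB n N lam mu
  have hxy : (lam + n / 2 - 1) - (mu + n / 2 - 1) = (lam - N + 1) - (mu - N + 1) := by ring
  generalize hBdef : BB N (lam + n / 2 - 1) (mu + n / 2 - 1) (lam - N + 1) (mu - N + 1) = B at hA
  have hB : ∀ i j, N < i + j → B i j = 0 := fun i j h => by rw [← hBdef, BB_eq_zero _ _ _ _ _ _ _ h]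
  have hp : pN n N lam mu = ∑ i ∈ range (N + 1), ∑ j ∈ range (N + 1),
      C (B i j) * X 1 ^ i * X 2 ^ j * X 0 ^ (N - i - j) := by
    simp only [pN, rr, ss, tt, hA]
    refine sum_congr rfl fun i _ => sum_subset (range_subset_range.mpr (by omega)) fun j _ hj => ?_
    rw [hB i j (by rw [mem_range] at hj; omega)]
    simp
  have hp' : pN n N lam mu = ∑ j ∈ range (N + 1), ∑ i ∈ range (N + 1),
      C (B i j) * X 2 ^ j * X 1 ^ i * X 0 ^ (N - j - i) := by
    rw [hp, sum_comm]
    refine sum_congr rfl fun j _ => sum_congr rfl fun i _ => ?_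
    rw [Nat.sub_right_comm]
    ring
  have hsymm : ∀ i j, B i j =
      BB N (mu + n / 2 - 1) (lam + n / 2 - 1) (mu - N + 1) (lam - N + 1) j i := fun i j => by
    rw [← hBdef, BB_symm _ _ _ _ _ hxy]
  have d1 : DD n lam mu 1 2 (pN n N lam mu) = 0 := by
    rw [hp]
    refine DD_eq_zero n N lam mu 1 2 (by decide) (by decide) (by decide) B hB ?_ ?_
    · intro i; rw [← hBdef]; exact BB_rec_zero N _ _ _ _ hx i
    · intro i j; rw [← hBdef]; exact BB_rec_succ N _ _ _ _ hxy hx hy i j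
  have d2 : DD n mu lam 2 1 (pN n N lam mu) = 0 := by
    rw [hp']
    refine DD_eq_zero n N mu lam 2 1 (by decide) (by decide) (by decide) (fun j i => B i j)
      (fun j i h => hB i j (by omega)) ?_ ?_
    · intro i; simp only [hsymm]; exact BB_rec_zero N _ _ _ _ hy i
    · intro i j; simp only [hsymm]
      exact BB_rec_succ N _ _ _ _ (by ring) hy hx i j
  rw [Pop_Phi, d1, d2]
  simp

end
end

section
/- Let n ≥ 3 be an integer, N ∈ ℕ, and λ, μ ∈ ℂ with λ, μ ∉ {m − n/2 : m ∈ ℕ}. Suppose B, B' : ℕ × ℕ → ℂ are families such that (i) B and B' each satisfy the four-term functional equation with parameters (n,N,λ,μ) at every (i,j) ∈ ℕ × ℕ, (ii) the transposed families (i,j) ↦ B(j,i) and (i,j) ↦ B'(j,i) each satisfy the four-term functional equation with parameters (n,N,μ,λ) at every (i,j) ∈ ℕ × ℕ, and (iii) B(0,0) = B'(0,0). Then B = B'. In particular, a solution of the recursion with the symmetry property is uniquely determined by its value at (0,0). -/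
/-!
The equation at `(i, j)` contains `B i (j + 1)` with coefficient `(j + 1) * (n + 2μ - 2 - 2j)`,
which vanishes only for `μ = (j + 1) - n / 2`, an excluded value. So it determines `B i (j + 1)`
from `B i j` and the row `i - 1` (`FourTermEq.step`). For the transposed family, the case `i = 0`
of this determines the column `B · 0` from `B 0 0`; once that column is known, the original
equation determines every row from the preceding one.
-/

open Finset

noncomputable section

/-- The four-term functional equation with parameters `(n,N,λ,μ)` at `(i,j)` for a family
`B : ℕ → ℕ → ℂ`, with the convention that terms of negative index are zero. -/
def FourTermEq (n N : ℕ) (lam mu : ℂ) (B : ℕ → ℕ → ℂ) (i j : ℕ) : Prop :=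
  (1 / 2 : ℂ) * ((i : ℂ) + j - N - 1) * ((i : ℂ) + j - N - 2) *
      (if i = 0 ∨ j = 0 then 0 else B (i - 1) (j - 1)) +
    (-(i : ℂ) ^ 2 + i * ((n : ℂ) + lam - 1) + ((j : ℂ) - N) * (-(j : ℂ) + N - lam - 1)) *
      B i j +
    ((j : ℂ) + 1) * ((n : ℂ) + 2 * mu - 2 - 2 * j) * B i (j + 1) +
    (1 / 2 : ℂ) * ((i : ℂ) + j - N - 1) * (-(i : ℂ) + 3 * j + N - 2 * mu) *
      (if i = 0 then 0 else B (i - 1) j) = 0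

/-- Two solutions that agree at `(i, j)` and on the preceding row agree at `(i, j + 1)`. -/
theorem FourTermEq.step {n N : ℕ} {lam mu : ℂ} {B B' : ℕ → ℕ → ℂ} {i j : ℕ}
    (hmu : ∀ m : ℕ, mu ≠ (m : ℂ) - (n : ℂ) / 2)
    (hB : FourTermEq n N lam mu B i j) (hB' : FourTermEq n N lam mu B' i j)
    (hij : B i j = B' i j) (hrow : i ≠ 0 → ∀ k, B (i - 1) k = B' (i - 1) k) :
    B i (j + 1) = B' i (j + 1) := by
  have hc : ((j : ℂ) + 1) * ((n : ℂ) + 2 * mu - 2 - 2 * j) ≠ 0 := by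
    refine mul_ne_zero (by exact_mod_cast j.succ_ne_zero) fun h => hmu (j + 1) ?_
    push_cast
    linear_combination h / 2
  have h1 : (if i = 0 ∨ j = 0 then 0 else B (i - 1) (j - 1)) =
      if i = 0 ∨ j = 0 then 0 else B' (i - 1) (j - 1) := by
    split_ifs with h
    · rfl
    · exact hrow (fun hi => h (Or.inl hi)) _
  have h2 : (if i = 0 then 0 else B (i - 1) j) = if i = 0 then 0 else B' (i - 1) j := by
    split_ifs with h
    · rfl
    · exact hrow h _
  unfold FourTermEq at hB hB'
  rw [h1, h2, hij] at hB
  exact mul_left_cancel₀ hc (by linear_combination hB - hB')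

/-- uniqueness of the solution of the four-term recursion with the symmetry
property; a solution is uniquely determined by its value at `(0,0)`. -/
theorem statement3 (n : ℕ) (hn : 3 ≤ n) (N : ℕ) (lam mu : ℂ)
    (hlam : ∀ m : ℕ, lam ≠ (m : ℂ) - (n : ℂ) / 2)
    (hmu : ∀ m : ℕ, mu ≠ (m : ℂ) - (n : ℂ) / 2)
    (B B' : ℕ → ℕ → ℂ)
    (hB : ∀ i j : ℕ, FourTermEq n N lam mu B i j)
    (hBt : ∀ i j : ℕ, FourTermEq n N mu lam (fun a b => B b a) i j)
    (hB' : ∀ i j : ℕ, FourTermEq n N lam mu B' i j)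
    (hB't : ∀ i j : ℕ, FourTermEq n N mu lam (fun a b => B' b a) i j)
    (h0 : B 0 0 = B' 0 0) :
    B = B' := by
  have hcol : ∀ i, B i 0 = B' i 0 := by
    intro i
    induction i with
    | zero => exact h0
    | succ i ih => exact FourTermEq.step hlam (hBt 0 i) (hB't 0 i) ih (fun h => absurd rfl h)
  have hall : ∀ i j, B i j = B' i j := by
    intro i
    induction i with
    | zero =>
      intro j
      induction j with
      | zero => exact h0
      | succ j ih => exact FourTermEq.step hmu (hB 0 j) (hB' 0 j) ih (fun h => absurd rfl h)
    | succ i ihi =>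
      intro j
      induction j with
      | zero => exact hcol _
      | succ j ih => exact FourTermEq.step hmu (hB (i + 1) j) (hB' (i + 1) j) ih (fun _ => ihi)
  funext i j
  exact hall i j

end
end

section
/- Let n ≥ 1 be an integer. For every polynomial p ∈ ℂ[r,s,t], one has Δ^ξ(Φ(p)) = Φ((t ∂_r² + 4 r ∂_r ∂_s + 2n ∂_s + 4 s ∂_s²)(p)) in ℂ[ξ₁,…,ξ_n,ν₁,…,ν_n], where Δ^ξ = Σ_{i=1}^n ∂²_{ξᵢ}. -/
/-!
By the chain rule, `∂_{ξᵢ} Φ(q) = νᵢ Φ(∂_r q) + 2 ξᵢ Φ(∂_s q)`, because `Φ(t)` does not involve `ξ`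
(`pderiv_Phi`). Applying this twice and using `∂_r ∂_s = ∂_s ∂_r` gives
`∂²_{ξᵢ} Φ(p) = νᵢ² Φ(∂_r² p) + 4 ξᵢνᵢ Φ(∂_r ∂_s p) + 2 Φ(∂_s p) + 4 ξᵢ² Φ(∂_s² p)`,
and summing over `i` turns the coefficients into `Φ(t)`, `4 Φ(r)`, `2n` and `4 Φ(s)`.
-/

open MvPolynomial Finset

noncomputable section

def dr (p : S) : S := pderiv 0 p
def ds (p : S) : S := pderiv 1 p

/-- The chain rule for `Φ` in the direction `ξᵢ`. -/
theorem pderiv_Phi (n : ℕ) (i : Fin n) (p : S) :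
    pderiv (Sum.inl i) (Phi n p) = ν n i * Phi n (dr p) + 2 * ξ n i * Phi n (ds p) := by
  induction p using MvPolynomial.induction_on with
  | C a => simp [dr, ds, Phi]
  | add p q hp hq =>
    simp only [dr, ds, map_add] at hp hq ⊢
    rw [hp, hq]
    ring
  | mul_X p j hp =>
    have hX : pderiv (Sum.inl i) (Phi n (X j)) =
        ν n i * Phi n (dr (X j)) + 2 * ξ n i * Phi n (ds (X j)) := by
      fin_cases j <;>
        simp [dr, ds, Phi, ξ, ν, pderiv_X, Pi.single_apply]
    simp only [dr, ds, Derivation.leibniz, smul_eq_mul, map_add, map_mul] at hp hX ⊢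
    rw [hp, hX]
    ring

theorem ds_dr (p : S) : ds (dr p) = dr (ds p) :=
  by
  unfold ds dr
  induction p using MvPolynomial.induction_on with
  | C a => simp
  | add p q hp hq => simp only [map_add, hp, hq]
  | mul_X p j hp =>
    fin_cases j <;> simp [pderiv_X, hp, add_comm]

theorem pderiv_pderiv_Phi (n : ℕ) (i : Fin n) (p : S) :
    pderiv (Sum.inl i) (pderiv (Sum.inl i) (Phi n p)) =
      ν n i ^ 2 * Phi n (dr (dr p)) + 4 * (ξ n i * ν n i) * Phi n (dr (ds p)) +
        2 * Phi n (ds p) + 4 * ξ n i ^ 2 * Phi n (ds (ds p)) := by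
  have hν : pderiv (Sum.inl i) (ν n i) = 0 := by simp [ν, pderiv_X]
  have hξ : pderiv (Sum.inl i) (ξ n i) = 1 := by simp [ξ]
  have h2 : pderiv (Sum.inl i) (2 : R n) = 0 := by
    simpa using (pderiv (R := ℂ) (Sum.inl i : Fin n ⊕ Fin n)).map_natCast 2
  rw [pderiv_Phi]
  simp only [map_add, Derivation.leibniz, smul_eq_mul, pderiv_Phi, hν, hξ, h2, ds_dr]
  ring

/-- `Δ^ξ(Φ(p)) = Φ((t ∂_r² + 4 r ∂_r ∂_s + 2n ∂_s + 4 s ∂_s²)(p))`. -/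
theorem statement6 (n : ℕ) (hn : 1 ≤ n) (p : S) :
    Δξ n (Phi n p) =
      Phi n (tt * dr (dr p) + 4 * rr * dr (ds p) + (2 * (n : ℂ)) • ds p +
        4 * ss * ds (ds p)) := by
  have hr : Phi n rr = ∑ i : Fin n, ξ n i * ν n i := by simp [Phi, rr]
  have hs : Phi n ss = ∑ i : Fin n, ξ n i ^ 2 := by simp [Phi, ss]
  have ht : Phi n tt = ∑ i : Fin n, ν n i ^ 2 := by simp [Phi, tt]
  have h4 : Phi n 4 = 4 := map_ofNat (Phi n) 4
  simp only [Δξ, pderiv_pderiv_Phi, map_add, map_mul, map_smul, hr, hs, ht, h4,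
    Finset.sum_add_distrib, ← Finset.sum_mul, ← Finset.mul_sum]
  have h2n : (C (2 * (n : ℂ)) : R n) = 2 * (n : R n) := by
    rw [map_mul, map_natCast, map_ofNat]
  rw [smul_eq_C_mul, h2n, Finset.sum_const, Finset.card_univ, Fintype.card_fin, nsmul_eq_mul]
  ring

end
end

section
/- Let n ≥ 3 be an integer and λ, μ ∈ ℂ. The degree-one polynomial p₁ = (n+2λ−2)(n+2μ−2)·r − μ(n+2μ−2)·s − λ(n+2λ−2)·t ∈ ℂ[r,s,t] satisfies D₁(λ,μ)(p₁) = 0 and D₂(λ,μ)(p₁) = 0. Moreover, for λ, μ ∉ {m − n/2 : m ∈ ℕ}, p₁ is up to scalar multiple the unique homogeneous degree-one polynomial in ℂ[r,s,t] annihilated by both D₁(λ,μ) and D₂(λ,μ). -/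
/-!
On a linear form `q = a r + b s + c t` every second-order term of `D₁` and `D₂` vanishes, so
`D₁ q = (n+2λ−2) b + μ a` and `D₂ q = (n+2μ−2) c + λ a` are constants (`D1_linear`, `D2_linear`).
Substituting the coefficients of `p₁` gives zero in both. Conversely, the value `m = 1` in the
genericity assumption says that `n+2λ−2` and `n+2μ−2` are nonzero, so `b` and `c` are determined by
`a`, and `q = a / ((n+2λ−2)(n+2μ−2)) · p₁`. That a homogeneous `q` of degree one has this shape
follows from Euler's identity, its partial derivatives being constants
(`exists_linear_of_isHomogeneous_one`).
-/

open MvPolynomial Finset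

noncomputable section

def dt (p : S) : S := pderiv 2 p
def Er (p : S) : S := rr * dr p
def Es (p : S) : S := ss * ds p
def Et (p : S) : S := tt * dt p

/-- `D₁(λ,μ) = ½ t ∂_r² + (n+2λ−2−2E^s)∂_s − (E^r+2E^t−μ)∂_r`. -/
def D1 (n : ℕ) (lam mu : ℂ) (p : S) : S :=
  C (1 / 2 : ℂ) * tt * dr (dr p) +
    (C ((n : ℂ) + 2 * lam - 2) * ds p - 2 * Es (ds p)) -
    (Er (dr p) + 2 * Et (dr p) - C mu * dr p)

/-- `D₂(λ,μ) = ½ s ∂_r² + (n+2μ−2−2E^t)∂_t − (E^r+2E^s−λ)∂_r`. -/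
def D2 (n : ℕ) (lam mu : ℂ) (p : S) : S :=
  C (1 / 2 : ℂ) * ss * dr (dr p) +
    (C ((n : ℂ) + 2 * mu - 2) * dt p - 2 * Et (dt p)) -
    (Er (dr p) + 2 * Es (dr p) - C lam * dr p)

/-- The degree-one singular-vector polynomial
`p₁ = (n+2λ−2)(n+2μ−2)·r − μ(n+2μ−2)·s − λ(n+2λ−2)·t`. -/
def p1 (n : ℕ) (lam mu : ℂ) : S :=
  C (((n : ℂ) + 2 * lam - 2) * ((n : ℂ) + 2 * mu - 2)) * rr -
    C (mu * ((n : ℂ) + 2 * mu - 2)) * ss - C (lam * ((n : ℂ) + 2 * lam - 2)) * tt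

theorem D1_linear (n : ℕ) (lam mu a b c : ℂ) :
    D1 n lam mu (C a * rr + C b * ss + C c * tt) =
      C (((n : ℂ) + 2 * lam - 2) * b + mu * a) := by
  simp [D1, dr, ds, dt, Er, Es, Et, rr, ss, tt, pderiv_X]

theorem D2_linear (n : ℕ) (lam mu a b c : ℂ) :
    D2 n lam mu (C a * rr + C b * ss + C c * tt) =
      C (((n : ℂ) + 2 * mu - 2) * c + lam * a) := by
  simp [D2, dr, ds, dt, Er, Es, Et, rr, ss, tt, pderiv_X]

theorem p1_eq_linear (n : ℕ) (lam mu : ℂ) :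
    p1 n lam mu = C (((n : ℂ) + 2 * lam - 2) * ((n : ℂ) + 2 * mu - 2)) * rr +
      C (-(mu * ((n : ℂ) + 2 * mu - 2))) * ss + C (-(lam * ((n : ℂ) + 2 * lam - 2))) * tt := by
  rw [p1, C_neg, C_neg]
  ring

theorem exists_linear_of_isHomogeneous_one (q : S) (hq : q.IsHomogeneous 1) :
    ∃ a b c : ℂ, q = C a * rr + C b * ss + C c * tt := by
  have hconst (i : Fin 3) : pderiv i q = C ((pderiv i q).coeff 0) :=
    totalDegree_eq_zero_iff_eq_C.1 ((totalDegree_zero_iff_isHomogeneous _).2 hq.pderiv)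
  have euler := hq.sum_X_mul_pderiv
  rw [Fin.sum_univ_three, one_smul, hconst 0, hconst 1, hconst 2] at euler
  refine ⟨(pderiv 0 q).coeff 0, (pderiv 1 q).coeff 0, (pderiv 2 q).coeff 0, euler.symm.trans ?_⟩
  rw [rr, ss, tt]
  ring

/-- `p₁` is annihilated by `D₁(λ,μ)` and `D₂(λ,μ)`, and for
`λ, μ ∉ {m − n/2 : m ∈ ℕ}` it is up to scalar multiple the unique homogeneous
degree-one polynomial annihilated by both. -/
theorem statement10 (n : ℕ) (hn : 3 ≤ n) (lam mu : ℂ) :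
    (D1 n lam mu (p1 n lam mu) = 0 ∧ D2 n lam mu (p1 n lam mu) = 0) ∧
      ((∀ m : ℕ, lam ≠ (m : ℂ) - (n : ℂ) / 2) →
        (∀ m : ℕ, mu ≠ (m : ℂ) - (n : ℂ) / 2) →
        ∀ q : S, q.IsHomogeneous 1 → D1 n lam mu q = 0 → D2 n lam mu q = 0 →
          ∃ c : ℂ, q = C c * p1 n lam mu) := by
  constructor
  · rw [p1_eq_linear, D1_linear, D2_linear]
    constructor <;> rw [C_eq_zero] <;> ring
  · intro hlam hmu q hq h1 h2
    obtain ⟨a, b, c, rfl⟩ := exists_linear_of_isHomogeneous_one q hq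
    rw [D1_linear, C_eq_zero] at h1
    rw [D2_linear, C_eq_zero] at h2
    -- The excluded value `m = 1` is exactly the zero of each of these factors.
    have hA : (n : ℂ) + 2 * lam - 2 ≠ 0 := fun h =>
      hlam 1 (by push_cast; linear_combination h / 2)
    have hB : (n : ℂ) + 2 * mu - 2 ≠ 0 := fun h =>
      hmu 1 (by push_cast; linear_combination h / 2)
    set A := (n : ℂ) + 2 * lam - 2 with hAdef
    set B := (n : ℂ) + 2 * mu - 2 with hBdef
    have ha : a = a / (A * B) * (A * B) := by field_simp
    have hb : b = a / (A * B) * -(mu * B) := by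
      field_simp
      linear_combination h1
    have hc : c = a / (A * B) * -(lam * A) := by
      field_simp
      linear_combination h2
    refine ⟨a / (A * B), ?_⟩
    rw [p1_eq_linear, ← hAdef, ← hBdef, mul_add, mul_add, ← mul_assoc, ← mul_assoc, ← mul_assoc,
      ← C_mul, ← C_mul, ← C_mul, ← ha, ← hb, ← hc]

end
end

section
/- Let n ≥ 3 be an integer and λ, μ ∈ ℂ. The degree-two polynomial p₂ = (n+2λ−2)(n+2λ−4)(n+2μ−2)(n+2μ−4)·r² + μ(μ−1)(n+2μ−2)(n+2μ−4)·s² + λ(λ−1)(n+2λ−2)(n+2λ−4)·t² − 2(μ−1)(n+2λ−4)(n+2μ−2)(n+2μ−4)·rs + 2((λ−2)(μ−2)−(1+n/2))(n+2λ−4)(n+2μ−4)·st − 2(λ−1)(n+2λ−2)(n+2λ−4)(n+2μ−4)·rt ∈ ℂ[r,s,t] satisfies D₁(λ,μ)(p₂) = 0 and D₂(λ,μ)(p₂) = 0. Moreover, for λ, μ ∉ {m − n/2 : m ∈ ℕ}, p₂ is up to scalar multiple the unique homogeneous degree-two polynomial in ℂ[r,s,t] annihilated by both D₁(λ,μ)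 and D₂(λ,μ). -/
/-!
Write a degree-two form as `q = a r² + b s² + c t² + d rs + e st + f rt`. With
`A = n + 2λ - 2` and `B = n + 2μ - 2`, comparing coefficients turns `D₁ q = 0` and `D₂ q = 0` into

* `A d = -2(μ-1) a`, `2(A-2) b = -μ d`, `A e = -a - (μ-2) f`;
* `B f = -2(λ-1) a`, `2(B-2) c = -λ f`, `B e = -a - (λ-2) d`.

The coefficients of `p₂` solve this system, which gives the annihilation claim. If `λ` and `μ`
avoid `m - n/2` for `m = 1, 2`, then `A`, `A-2`, `B`, `B-2` are all nonzero, so the system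
determines every coefficient from `a`, and `q = c p₂` with `c = a / (A(A-2)B(B-2))`.

That a homogeneous `q` of degree two has the displayed shape (`exists_quadForm_eq`) follows from
Euler's identity applied twice, since the second partial derivatives of `q` are constants.
-/

open MvPolynomial Finset

noncomputable section

/-- The degree-two singular-vector polynomial `p₂`. -/
def p2 (n : ℕ) (lam mu : ℂ) : S :=
  C (((n : ℂ) + 2 * lam - 2) * ((n : ℂ) + 2 * lam - 4) * ((n : ℂ) + 2 * mu - 2) *
      ((n : ℂ) + 2 * mu - 4)) * rr ^ 2 +
    C (mu * (mu - 1) * ((n : ℂ) + 2 * mu - 2) * ((n : ℂ) + 2 * mu - 4)) * ss ^ 2 +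
    C (lam * (lam - 1) * ((n : ℂ) + 2 * lam - 2) * ((n : ℂ) + 2 * lam - 4)) * tt ^ 2 -
    C (2 * (mu - 1) * ((n : ℂ) + 2 * lam - 4) * ((n : ℂ) + 2 * mu - 2) *
      ((n : ℂ) + 2 * mu - 4)) * (rr * ss) +
    C (2 * ((lam - 2) * (mu - 2) - (1 + (n : ℂ) / 2)) * ((n : ℂ) + 2 * lam - 4) *
      ((n : ℂ) + 2 * mu - 4)) * (ss * tt) -
    C (2 * (lam - 1) * ((n : ℂ) + 2 * lam - 2) * ((n : ℂ) + 2 * lam - 4) *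
      ((n : ℂ) + 2 * mu - 4)) * (rr * tt)

/-- The quadratic form `a r² + b s² + c t² + d rs + e st + f rt`. -/
def quadForm (a b c d e f : ℂ) : S :=
  C a * rr ^ 2 + C b * ss ^ 2 + C c * tt ^ 2 + C d * (rr * ss) + C e * (ss * tt) +
    C f * (rr * tt)

lemma p2_eq_quadForm (n : ℕ) (lam mu : ℂ) :
    p2 n lam mu = quadForm
      (((n : ℂ) + 2 * lam - 2) * ((n : ℂ) + 2 * lam - 4) * ((n : ℂ) + 2 * mu - 2) *
        ((n : ℂ) + 2 * mu - 4))
      (mu * (mu - 1) * ((n : ℂ) + 2 * mu - 2) * ((n : ℂ) + 2 * mu - 4))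
      (lam * (lam - 1) * ((n : ℂ) + 2 * lam - 2) * ((n : ℂ) + 2 * lam - 4))
      (-(2 * (mu - 1) * ((n : ℂ) + 2 * lam - 4) * ((n : ℂ) + 2 * mu - 2) *
        ((n : ℂ) + 2 * mu - 4)))
      (2 * ((lam - 2) * (mu - 2) - (1 + (n : ℂ) / 2)) * ((n : ℂ) + 2 * lam - 4) *
        ((n : ℂ) + 2 * mu - 4))
      (-(2 * (lam - 1) * ((n : ℂ) + 2 * lam - 2) * ((n : ℂ) + 2 * lam - 4) *
        ((n : ℂ) + 2 * mu - 4))) := by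
  simp only [p2, quadForm, map_neg]
  ring

lemma C_mul_quadForm (k a b c d e f : ℂ) :
    C k * quadForm a b c d e f =
      quadForm (k * a) (k * b) (k * c) (k * d) (k * e) (k * f) := by
  simp only [quadForm, map_mul]
  ring

lemma dr_quadForm (a b c d e f : ℂ) :
    dr (quadForm a b c d e f) = C (2 * a) * rr + C d * ss + C f * tt := by
  simp [dr, quadForm, rr, ss, tt, pderiv_X, Derivation.leibniz_pow,
    map_ofNat C 2]
  ring

lemma ds_quadForm (a b c d e f : ℂ) :
    ds (quadForm a b c d e f) = C d * rr + C (2 * b) * ss + C e * tt := by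
  simp [ds, quadForm, rr, ss, tt, pderiv_X, Derivation.leibniz_pow,
    map_ofNat C 2]
  ring

lemma dt_quadForm (a b c d e f : ℂ) :
    dt (quadForm a b c d e f) = C f * rr + C e * ss + C (2 * c) * tt := by
  simp [dt, quadForm, rr, ss, tt, pderiv_X, Derivation.leibniz_pow,
    map_ofNat C 2]
  ring

lemma dr_linear (a b c : ℂ) : dr (C a * rr + C b * ss + C c * tt) = C a := by
  simp [dr, rr, ss, tt, pderiv_X]

lemma ds_linear (a b c : ℂ) : ds (C a * rr + C b * ss + C c * tt) = C b := by
  simp [ds, rr, ss, tt, pderiv_X]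

lemma dt_linear (a b c : ℂ) : dt (C a * rr + C b * ss + C c * tt) = C c := by
  simp [dt, rr, ss, tt, pderiv_X]

lemma linear_eq_zero_iff (a b c : ℂ) :
    C a * rr + C b * ss + C c * tt = 0 ↔ a = 0 ∧ b = 0 ∧ c = 0 := by
  refine ⟨fun h => ?_, by rintro ⟨rfl, rfl, rfl⟩; simp⟩
  have hr := dr_linear a b c
  have hs := ds_linear a b c
  have ht := dt_linear a b c
  rw [h] at hr hs ht
  simp only [dr, ds, dt, map_zero] at hr hs ht
  exact ⟨C_eq_zero.1 hr.symm, C_eq_zero.1 hs.symm, C_eq_zero.1 ht.symm⟩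

lemma D1_quadForm (n : ℕ) (lam mu a b c d e f : ℂ) :
    D1 n lam mu (quadForm a b c d e f) =
      C (((n : ℂ) + 2 * lam - 2) * d + 2 * (mu - 1) * a) * rr +
      C (2 * ((n : ℂ) + 2 * lam - 4) * b + mu * d) * ss +
      C (a + ((n : ℂ) + 2 * lam - 2) * e + (mu - 2) * f) * tt := by
  have h : (C (1 / 2 : ℂ) : S) * C (2 * a) = C a := by rw [← C_mul]; congr 1; ring
  simp only [D1, Er, Es, Et, dr_quadForm, ds_quadForm, dr_linear, ds_linear, dt_linear]
  rw [mul_right_comm, h]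
  simp only [map_add, map_sub, map_mul, map_ofNat, map_one]
  ring

lemma D2_quadForm (n : ℕ) (lam mu a b c d e f : ℂ) :
    D2 n lam mu (quadForm a b c d e f) =
      C (((n : ℂ) + 2 * mu - 2) * f + 2 * (lam - 1) * a) * rr +
      C (a + ((n : ℂ) + 2 * mu - 2) * e + (lam - 2) * d) * ss +
      C (2 * ((n : ℂ) + 2 * mu - 4) * c + lam * f) * tt := by
  have h : (C (1 / 2 : ℂ) : S) * C (2 * a) = C a := by rw [← C_mul]; congr 1; ring
  simp only [D2, Er, Es, Et, dr_quadForm, dt_quadForm, dr_linear, ds_linear, dt_linear]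
  rw [mul_right_comm, h]
  simp only [map_add, map_sub, map_mul, map_ofNat, map_one]
  ring

lemma exists_linear_eq {q : S} (hq : q.IsHomogeneous 1) :
    ∃ a b c : ℂ, q = C a * rr + C b * ss + C c * tt := by
  have hconst : ∀ i, ∃ x : ℂ, pderiv i q = C x := fun i =>
    ⟨_, totalDegree_eq_zero_iff_eq_C.1 ((totalDegree_zero_iff_isHomogeneous _).2 hq.pderiv)⟩
  obtain ⟨a, ha⟩ := hconst 0
  obtain ⟨b, hb⟩ := hconst 1
  obtain ⟨c, hc⟩ := hconst 2
  refine ⟨a, b, c, ?_⟩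
  have h := hq.sum_X_mul_pderiv
  rw [Fin.sum_univ_three, ha, hb, hc, one_smul] at h
  rw [← h, rr, ss, tt]
  ring

lemma exists_quadForm_eq {q : S} (hq : q.IsHomogeneous 2) :
    ∃ a b c d e f : ℂ, q = quadForm a b c d e f := by
  obtain ⟨a₀, b₀, c₀, h₀⟩ := exists_linear_eq (hq.pderiv (i := 0))
  obtain ⟨a₁, b₁, c₁, h₁⟩ := exists_linear_eq (hq.pderiv (i := 1))
  obtain ⟨a₂, b₂, c₂, h₂⟩ := exists_linear_eq (hq.pderiv (i := 2))
  have h := hq.sum_X_mul_pderiv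
  rw [Fin.sum_univ_three, h₀, h₁, h₂] at h
  have key : q = C (1 / 2 : ℂ) * (2 • q) := by
    rw [nsmul_eq_mul, ← mul_assoc, Nat.cast_ofNat, ← map_ofNat (C : ℂ →+* S) 2, ← C_mul]
    norm_num
  refine ⟨1 / 2 * a₀, 1 / 2 * b₁, 1 / 2 * c₂, 1 / 2 * (b₀ + a₁), 1 / 2 * (c₁ + b₂),
    1 / 2 * (c₀ + a₂), ?_⟩
  rw [key, ← h, ← C_mul_quadForm]
  simp only [quadForm, rr, ss, tt, map_add]
  ring

/-- `p₂` is annihilated by `D₁(λ,μ)` and `D₂(λ,μ)`, and for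
`λ, μ ∉ {m − n/2 : m ∈ ℕ}` it is up to scalar multiple the unique homogeneous
degree-two polynomial annihilated by both. -/
theorem statement11 (n : ℕ) (hn : 3 ≤ n) (lam mu : ℂ) :
    (D1 n lam mu (p2 n lam mu) = 0 ∧ D2 n lam mu (p2 n lam mu) = 0) ∧
      ((∀ m : ℕ, lam ≠ (m : ℂ) - (n : ℂ) / 2) →
        (∀ m : ℕ, mu ≠ (m : ℂ) - (n : ℂ) / 2) →
        ∀ q : S, q.IsHomogeneous 2 → D1 n lam mu q = 0 → D2 n lam mu q = 0 →
          ∃ c : ℂ, q = C c * p2 n lam mu) := by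
  refine ⟨⟨?_, ?_⟩, ?_⟩
  · rw [p2_eq_quadForm, D1_quadForm, linear_eq_zero_iff]
    refine ⟨?_, ?_, ?_⟩ <;> ring
  · rw [p2_eq_quadForm, D2_quadForm, linear_eq_zero_iff]
    refine ⟨?_, ?_, ?_⟩ <;> ring
  · intro hlam hmu q hq h1 h2
    obtain ⟨a, b, c, d, e, f, rfl⟩ := exists_quadForm_eq hq
    rw [D1_quadForm, linear_eq_zero_iff] at h1
    rw [D2_quadForm, linear_eq_zero_iff] at h2
    obtain ⟨hd, hb, he⟩ := h1
    obtain ⟨hf, -, hc⟩ := h2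
    have hA : (n : ℂ) + 2 * lam - 2 ≠ 0 := fun h => hlam 1 (by
      push_cast; linear_combination h / 2)
    have hA' : (n : ℂ) + 2 * lam - 4 ≠ 0 := fun h => hlam 2 (by
      push_cast; linear_combination h / 2)
    have hB : (n : ℂ) + 2 * mu - 2 ≠ 0 := fun h => hmu 1 (by
      push_cast; linear_combination h / 2)
    have hB' : (n : ℂ) + 2 * mu - 4 ≠ 0 := fun h => hmu 2 (by
      push_cast; linear_combination h / 2)
    -- With the leading coefficient `a` written as a multiple of that of `p₂`, the system can be
    -- solved for `d`, `f`, `b`, `c`, `e` by cancelling nonzero factors only.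
    obtain ⟨k, rfl⟩ : ∃ k, a = k * (((n : ℂ) + 2 * lam - 2) * ((n : ℂ) + 2 * lam - 4) *
        ((n : ℂ) + 2 * mu - 2) * ((n : ℂ) + 2 * mu - 4)) :=
      ⟨_, (div_mul_cancel₀ a (mul_ne_zero (mul_ne_zero (mul_ne_zero hA hA') hB) hB')).symm⟩
    obtain rfl : d = k * -(2 * (mu - 1) * ((n : ℂ) + 2 * lam - 4) * ((n : ℂ) + 2 * mu - 2) *
        ((n : ℂ) + 2 * mu - 4)) := mul_left_cancel₀ hA (by linear_combination hd)
    obtain rfl : f = k * -(2 * (lam - 1) * ((n : ℂ) + 2 * lam - 2) * ((n : ℂ) + 2 * lam - 4) *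
        ((n : ℂ) + 2 * mu - 4)) := mul_left_cancel₀ hB (by linear_combination hf)
    obtain rfl : b = k * (mu * (mu - 1) * ((n : ℂ) + 2 * mu - 2) * ((n : ℂ) + 2 * mu - 4)) :=
      mul_left_cancel₀ hA' (by linear_combination hb / 2)
    obtain rfl : c = k * (lam * (lam - 1) * ((n : ℂ) + 2 * lam - 2) *
        ((n : ℂ) + 2 * lam - 4)) := mul_left_cancel₀ hB' (by linear_combination hc / 2)
    obtain rfl : e = k * (2 * ((lam - 2) * (mu - 2) - (1 + (n : ℂ) / 2)) *
        ((n : ℂ) + 2 * lam - 4) * ((n : ℂ) + 2 * mu - 4)) :=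
      mul_left_cancel₀ hA (by linear_combination he)
    exact ⟨k, by rw [p2_eq_quadForm, C_mul_quadForm]⟩

end
end

section
/- Let n ≥ 3 be an integer, N ∈ ℕ, and λ, μ ∈ ℂ with λ, μ ∉ {m − n/2 : m ∈ ℕ}. Then for every i ∈ ℕ the diagonal coefficient is symmetric in the inducing parameters: A_{i,i}(λ,μ) = A_{i,i}(μ,λ). In particular, A_{i,i}(λ,μ), after clearing the Pochhammer denominators, is a polynomial in the elementary symmetric functions λμ and λ+μ. -/
/-!
Up to the factor `(i!)²`, the sum in `A_{i,i}(λ,μ)` is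
`G(a,b) = ∑_k (-1)^k C(b+k,k) C(a,k) C(a+e-k,i-k)`, with generalized binomial coefficients and
`a = λ - N`, `b = μ - N`, `e = N + n/2 - 1`. Expanding `C(b+k,k) = ∑_j C(k,j) C(b,j)` by
Chu–Vandermonde, using `C(k,j) C(a,k) = C(a,j) C(a-j,k-j)`, and evaluating the remaining sum over
`k` by Chu–Vandermonde in its reflected form `∑_m (-1)^m C(x,m) C(x+e-m,p-m) = C(e,p)` gives
`G(a,b) = ∑_j (-1)^j C(a,j) C(b,j) C(e,i-j)`, which is visibly symmetric in `a` and `b`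
(`sum_choose_eq_symmetric`).

The prefactor is symmetric because `(1-n/2-μ)_i = (-1)^i (μ+n/2-i)_i`, so its denominator contains
`(μ+n/2-i)_i (λ+n/2-i)_i`.
-/

open Finset

noncomputable section

lemma pk_eq_factorial_mul_choose (x : ℂ) (l : ℕ) :
    pk x l = (l.factorial : ℂ) * Ring.choose (x + l - 1) l := by
  rw [← Ring.multichoose_eq, ← nsmul_eq_mul, Ring.factorial_nsmul_multichoose_eq_ascPochhammer,
    Polynomial.ascPochhammer_smeval_eq_eval, pk]

lemma choose_neg_eq (r : ℂ) (n : ℕ) :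
    Ring.choose (-r) n = (-1) ^ n * Ring.choose (r + n - 1) n := by
  rw [Ring.choose_neg, Int.negOnePow_def]
  simp [Units.smul_def]

/-- Reflection of the Pochhammer symbol occurring in the denominator of `A`. -/
lemma pk_one_sub (c x : ℂ) (i : ℕ) :
    pk (1 - c - x) i = (-1) ^ i * pk (x + c - i) i := by
  rw [pk_eq_factorial_mul_choose, pk_eq_factorial_mul_choose,
    show 1 - c - x + i - 1 = -(x + c - i) by ring, choose_neg_eq]
  ring

lemma vandermonde_range (r s : ℂ) (k : ℕ) :
    Ring.choose (r + s) k =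
      ∑ j ∈ range (k + 1), Ring.choose r j * Ring.choose s (k - j) := by
  rw [Ring.add_choose_eq k (Commute.all r s),
    Finset.Nat.sum_antidiagonal_eq_sum_range_succ (fun p q => Ring.choose r p * Ring.choose s q)]

/-- Chu–Vandermonde in reflected form: `C(-r,n) = (-1)^n C(r+n-1,n)` turns `C(x+e-m,p-m)` into a
binomial whose upper argument `p-1-e-x` does not depend on `m`. -/
lemma sum_alternating_choose (x e : ℂ) (p : ℕ) :
    ∑ m ∈ range (p + 1), (-1) ^ m * Ring.choose x m * Ring.choose (x + e - m) (p - m) =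
      Ring.choose e p := by
  have h1 : Ring.choose e p = (-1) ^ p * Ring.choose (x + (p - 1 - e - x)) p := by
    rw [show e = -(-e) by ring, choose_neg_eq]
    congr 2
    ring
  rw [h1, vandermonde_range, mul_sum]
  refine sum_congr rfl fun m hm => ?_
  have hmp : m ≤ p := by simpa [Nat.lt_succ_iff] using hm
  rw [show x + e - m = -(-(x + e - m)) by ring, choose_neg_eq, Nat.cast_sub hmp,
    show -(x + e - m) + ((p : ℂ) - m) - 1 = p - 1 - e - x by ring]
  have h2 : (-1 : ℂ) ^ p = (-1) ^ m * (-1) ^ (p - m) := by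
    rw [← pow_add, Nat.add_sub_cancel' hmp]
  rw [h2]
  ring

lemma choose_add_self (b : ℂ) (k : ℕ) :
    Ring.choose (b + k) k = ∑ j ∈ range (k + 1), Ring.choose b j * (k.choose j : ℂ) := by
  rw [vandermonde_range]
  refine sum_congr rfl fun j hj => ?_
  have hjk : j ≤ k := by simpa [Nat.lt_succ_iff] using hj
  rw [Ring.choose_natCast, Nat.choose_symm hjk]

/-- The sum in the diagonal coefficient, rewritten in a form symmetric in `a` and `b`. -/
lemma sum_choose_eq_symmetric (a b e : ℂ) (i : ℕ) :
    ∑ k ∈ range (i + 1), (-1) ^ k * Ring.choose (b + k) k * Ring.choose a k *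
        Ring.choose (a + e - k) (i - k) =
      ∑ j ∈ range (i + 1), (-1) ^ j * (Ring.choose a j * Ring.choose b j) *
        Ring.choose e (i - j) := by
  have hexp : ∀ j ∈ range (i + 1),
      (-1) ^ j * (Ring.choose a j * Ring.choose b j) * Ring.choose e (i - j) =
        ∑ m ∈ range (i - j + 1), (-1) ^ j * (Ring.choose a j * Ring.choose b j) *
          ((-1) ^ m * Ring.choose (a - j) m * Ring.choose (a - j + e - m) (i - j - m)) := by
    intro j _
    rw [← mul_sum, sum_alternating_choose]
  rw [sum_congr rfl hexp]
  simp_rw [choose_add_self, mul_sum, sum_mul]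
  rw [sum_sigma', sum_sigma']
  -- Reindex the triangle `j ≤ k ≤ i` by `k = j + m`.
  refine sum_nbij' (fun q => ⟨q.2, q.1 - q.2⟩) (fun q => ⟨q.1 + q.2, q.1⟩) ?_ ?_ ?_ ?_ ?_
  · rintro ⟨k, j⟩ h
    simp only [mem_sigma, mem_range] at h ⊢
    omega
  · rintro ⟨j, m⟩ h
    simp only [mem_sigma, mem_range] at h ⊢
    omega
  · rintro ⟨k, j⟩ h
    simp only [mem_sigma, mem_range] at h
    simp only [Sigma.mk.injEq, heq_eq_eq, and_true]
    omega
  · rintro ⟨j, m⟩ h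
    simp
  · rintro ⟨k, j⟩ h
    simp only [mem_sigma, mem_range] at h
    obtain ⟨m, rfl⟩ : ∃ m, k = j + m := ⟨k - j, by omega⟩
    have h3 := Ring.choose_smul_choose a (Nat.le_add_right j m)
    rw [nsmul_eq_mul] at h3
    simp only [Nat.add_sub_cancel_left] at h3 ⊢
    rw [show a - (j : ℂ) + e - m = a + e - ((j + m : ℕ) : ℂ) by push_cast; ring,
      Nat.sub_sub, pow_add]
    linear_combination (-1) ^ j * (-1) ^ m * Ring.choose b j *
      Ring.choose (a + e - ((j + m : ℕ) : ℂ)) (i - (j + m)) * h3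

lemma sum_pk_eq (c lam mu : ℂ) (N i : ℕ) :
    ∑ k ∈ Finset.range (i + 1),
      (-1 : ℂ) ^ k * (Nat.choose i k : ℂ) * pk ((i : ℂ) - i + 1 + k) (i - k) *
        pk (lam + c - i) (i - k) * pk (mu - (N : ℂ) + 1) k * pk (lam - (N : ℂ) + 1 - k) k =
      (i.factorial : ℂ) ^ 2 * ∑ j ∈ range (i + 1),
        (-1) ^ j * (Ring.choose (lam - N) j * Ring.choose (mu - N) j) *
          Ring.choose (N + c - 1) (i - j) := by
  rw [← sum_choose_eq_symmetric, mul_sum]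
  refine sum_congr rfl fun k hk => ?_
  have hki : k ≤ i := by simpa [Nat.lt_succ_iff] using hk
  have h1 : (k.factorial : ℂ) * pk ((i : ℂ) - i + 1 + k) (i - k) = i.factorial := by
    rw [pk, show (i : ℂ) - i + 1 + k = k + 1 by ring, factorial_mul_ascPochhammer,
      Nat.add_sub_cancel' hki]
  have h2 : (i.choose k : ℂ) * k.factorial * (i - k).factorial = i.factorial := by
    exact_mod_cast Nat.choose_mul_factorial_mul_factorial hki
  rw [pk_eq_factorial_mul_choose (lam + c - i), pk_eq_factorial_mul_choose (mu - N + 1),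
    pk_eq_factorial_mul_choose (lam - N + 1 - k), Nat.cast_sub hki,
    show lam + c - i + ((i : ℂ) - k) - 1 = lam - N + (N + c - 1) - k by ring,
    show mu - N + 1 + (k : ℂ) - 1 = mu - N + k by ring,
    show lam - N + 1 - (k : ℂ) + k - 1 = lam - N by ring, sq]
  nth_rewrite 1 [← h1]
  rw [← h2]
  ring

/-- the diagonal coefficient is symmetric in the inducing parameters:
`A_{i,i}(λ,μ) = A_{i,i}(μ,λ)`. -/
theorem statement13 (n : ℕ) (hn : 3 ≤ n) (N : ℕ) (lam mu : ℂ)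
    (hlam : ∀ m : ℕ, lam ≠ (m : ℂ) - (n : ℂ) / 2)
    (hmu : ∀ m : ℕ, mu ≠ (m : ℂ) - (n : ℂ) / 2) (i : ℕ) :
    A n N lam mu i i = A n N mu lam i i := by
  have hpk : ∀ x : ℂ, pk x (i - i) = 1 := fun x => by simp [pk]
  simp only [A]
  rw [sum_pk_eq, sum_pk_eq, pk_one_sub, pk_one_sub, hpk, hpk]
  congr 1
  · congr 1
    ring
  · simp only [mul_comm (Ring.choose (lam - (N : ℂ)) _)]

end
end

section
/- Let n ≥ 3 be an integer. A polynomial F ∈ ℝ[ξ₁,…,ξ_n,ν₁,…,ν_n] is invariant under the diagonal action of the special orthogonal group SO(n) (i.e. F(gξ, gν) = F(ξ,ν) for all g ∈ SO(n), where g acts simultaneously on the vectors ξ = (ξ₁,…,ξ_n) and ν = (ν₁,…,ν_n) by matrix multiplication) if and only if F lies in the subalgebra of ℝ[ξ₁,…,ξ_n,ν₁,…,ν_n] generated by the three quadratic polynomials Σ_{i=1}^n ξᵢ², Σ_{i=1}^n ξᵢνᵢ, and Σ_{i=1}^n νᵢ². -/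
/-!
Write `x = Σ ξᵢ²`, `y = Σ ξᵢνᵢ`, `z = Σ νᵢ²`. Orthogonal matrices preserve inner products, so
every polynomial in `x, y, z` is invariant. The converse has two halves.

Since `n ≥ 3`, the group `SO(n)` acts transitively on pairs of vectors with a given Gram matrix
(`exists_SO_map`), so an invariant `F` is determined by `p(a, b, c) = F(a e₀, b e₀ + c e₁)`, where
`x = a²`, `y = ab`, `z = b² + c²`, and `p` is unchanged by `(a, b) ↦ (-a, -b)` and by `c ↦ -c`.
Hence only monomials `aⁱ bʲ cᵏ` with `i + j` and `k` even contribute, and multiplying by a power of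
`a² = x` turns each into a polynomial in `x`, `y` and `a²c² = xz - y²`. This gives
`x ^ N * F ∈ ℝ[x, y, z]` for some `N` (`exists_pow_mul_eq`).

The power of `x` is then cancelled one factor at a time (`cancel_gramPoly`): if `x * F = G(x, y, z)`,
then evaluation at the complex isotropic vector `ξ = (1, i, 0, …)` and suitable `ν` shows that
`G(0, y, z)` vanishes identically, so `G` is divisible by its first variable.
-/

open MvPolynomial Finset

noncomputable section

/-- The special orthogonal group `SO(n)`: real `n×n` matrices `g` with `g gᵀ = 1` and
`det g = 1`. -/
def SO (n : ℕ) : Set (Matrix (Fin n) (Fin n) ℝ) :=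
  {g | g * g.transpose = 1 ∧ g.det = 1}

/-- The diagonal action of a matrix `g` on `ℝ[ξ₁,…,ξ_n,ν₁,…,ν_n]` by simultaneous linear
substitution `ξᵢ ↦ (gξ)ᵢ = Σ_j gᵢⱼ ξⱼ`, `νᵢ ↦ (gν)ᵢ = Σ_j gᵢⱼ νⱼ`, i.e. `F ↦ F(gξ, gν)`. -/
def matAct (n : ℕ) (g : Matrix (Fin n) (Fin n) ℝ) :
    MvPolynomial (Fin n ⊕ Fin n) ℝ →ₐ[ℝ] MvPolynomial (Fin n ⊕ Fin n) ℝ :=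
  aeval (Sum.elim
    (fun i => ∑ j : Fin n, C (g i j) * X (Sum.inl j))
    (fun i => ∑ j : Fin n, C (g i j) * X (Sum.inr j)))

/-! ### Orthogonal transformations of pairs of vectors -/

open Matrix in
lemma dotProduct_mulVec_mulVec {n : ℕ} {g : Matrix (Fin n) (Fin n) ℝ} (hg : g * gᵀ = 1)
    (u v : Fin n → ℝ) : (g *ᵥ u) ⬝ᵥ (g *ᵥ v) = u ⬝ᵥ v := by
  rw [dotProduct_mulVec, vecMul_mulVec, mul_eq_one_comm.mp hg, vecMul_one]

open Matrix in
/-- Given two vectors of equal length, some orthogonal matrix (a Householder reflection, or the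
identity if they coincide) maps the first to the second and fixes every vector having the same
inner product with both. -/
lemma exists_orthogonal_map {n : ℕ} (u v : Fin n → ℝ) (h : u ⬝ᵥ u = v ⬝ᵥ v) :
    ∃ g : Matrix (Fin n) (Fin n) ℝ, g * gᵀ = 1 ∧ g *ᵥ u = v ∧
      ∀ w, w ⬝ᵥ u = w ⬝ᵥ v → g *ᵥ w = w := by
  by_cases huv : u = v
  · exact ⟨1, by simp, by simp [huv], by simp⟩
  set d := u - v with hd
  have hdd : d ⬝ᵥ d ≠ 0 := by
    rw [Ne, dotProduct_self_eq_zero, hd, sub_eq_zero]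
    exact huv
  have hdu : d ⬝ᵥ d = 2 * (d ⬝ᵥ u) := by
    simp only [hd, sub_dotProduct, dotProduct_sub, dotProduct_comm v u]
    linarith
  clear_value d
  have hmul : ∀ w, (1 - (2 / (d ⬝ᵥ d)) • vecMulVec d d) *ᵥ w
      = w - (2 / (d ⬝ᵥ d) * (d ⬝ᵥ w)) • d := by
    intro w
    rw [sub_mulVec, one_mulVec, smul_mulVec, vecMulVec_mulVec]
    ext i
    simp
    ring
  refine ⟨1 - (2 / (d ⬝ᵥ d)) • vecMulVec d d, ?_, ?_, ?_⟩
  · have ht : (1 - (2 / (d ⬝ᵥ d)) • vecMulVec d d)ᵀ = 1 - (2 / (d ⬝ᵥ d)) • vecMulVec d d := by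
      simp [transpose_sub, transpose_smul, transpose_vecMulVec]
    rw [ht]
    refine Matrix.ext_of_mulVec_single fun i => ?_
    rw [← mulVec_mulVec, hmul, hmul, one_mulVec, dotProduct_sub, dotProduct_smul]
    ext j
    simp only [Pi.sub_apply, Pi.smul_apply, smul_eq_mul]
    field_simp
    ring
  · rw [hmul]
    have : 2 / (d ⬝ᵥ d) * (d ⬝ᵥ u) = 1 := by
      rw [div_mul_eq_mul_div, ← hdu, div_self hdd]
    rw [this, one_smul, hd]
    abel
  · intro w hw
    have : d ⬝ᵥ w = 0 := by
      rw [dotProduct_comm, hd, dotProduct_sub, hw, sub_self]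
    rw [hmul, this]
    simp

open Matrix in
/-- `SO(n)` acts transitively on pairs with a given Gram matrix, here with target pair in the plane
of the coordinates `i₀, i₁`. The third coordinate `i₂` is free, and changing its sign
corrects the determinant. -/
lemma exists_SO_map {n : ℕ} {i₀ i₁ i₂ : Fin n} (h02 : i₀ ≠ i₂) (h12 : i₁ ≠ i₂) (h01 : i₀ ≠ i₁)
    (ξ ν : Fin n → ℝ) (a b c : ℝ) (hx : ξ ⬝ᵥ ξ = a ^ 2) (hy : ξ ⬝ᵥ ν = a * b)
    (hz : ν ⬝ᵥ ν = b ^ 2 + c ^ 2) :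
    ∃ g ∈ SO n, g *ᵥ ξ = Pi.single i₀ a ∧ g *ᵥ ν = Pi.single i₀ b + Pi.single i₁ c := by
  obtain ⟨g, hg, hgξ, -⟩ := exists_orthogonal_map ξ (Pi.single i₀ a) (by simp [hx, sq])
  obtain ⟨k, hk, hkν, hkfix⟩ := exists_orthogonal_map (g *ᵥ ν) (Pi.single i₀ b + Pi.single i₁ c)
    (by
      rw [dotProduct_mulVec_mulVec hg, hz]
      simp [h01, h01.symm]
      ring)
  have hkξ := hkfix (Pi.single i₀ a) (by
    rw [← hgξ, dotProduct_mulVec_mulVec hg, hy, hgξ]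
    simp [h01])
  have hm : (k * g) * (k * g)ᵀ = 1 := by
    rw [transpose_mul, Matrix.mul_assoc, ← Matrix.mul_assoc g, hg, Matrix.one_mul, hk]
  have h1 : (k * g) *ᵥ ξ = Pi.single i₀ a := by rw [← mulVec_mulVec, hgξ, hkξ]
  have h2 : (k * g) *ᵥ ν = Pi.single i₀ b + Pi.single i₁ c := by rw [← mulVec_mulVec, hkν]
  have hdet : (k * g).det = 1 ∨ (k * g).det = -1 := by
    have := congrArg Matrix.det hm
    rw [det_mul, det_transpose, det_one] at this
    exact mul_self_eq_one_iff.mp this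
  rcases hdet with hdet | hdet
  · exact ⟨k * g, ⟨hm, hdet⟩, h1, h2⟩
  · set r : Matrix (Fin n) (Fin n) ℝ := diagonal (Function.update 1 i₂ (-1)) with hr
    have hrr : r * rᵀ = 1 := by
      rw [hr, diagonal_transpose, diagonal_mul_diagonal, ← diagonal_one]
      congr 1
      ext i
      by_cases hi : i = i₂
      · subst hi; simp
      · simp [hi]
    have hrdet : r.det = -1 := by
      rw [hr, det_diagonal, Finset.prod_update_of_mem (Finset.mem_univ _)]
      simp
    have hrs : ∀ i, i ≠ i₂ → ∀ t : ℝ, r *ᵥ Pi.single i t = Pi.single i t := by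
      intro i hi t
      ext j
      rw [hr, mulVec_diagonal]
      by_cases hj : j = i
      · subst hj; simp [hi]
      · simp [hj]
    refine ⟨r * (k * g), ⟨?_, ?_⟩, ?_, ?_⟩
    · rw [transpose_mul, Matrix.mul_assoc, ← Matrix.mul_assoc (k * g), hm, Matrix.one_mul, hrr]
    · rw [det_mul, hrdet, hdet]; norm_num
    · rw [← mulVec_mulVec, h1, hrs _ h02]
    · rw [← mulVec_mulVec, h2, mulVec_add, hrs _ h02, hrs _ h12]

/-- A Cholesky factor of the Gram matrix of two vectors. -/
lemma exists_gram_coords {n : ℕ} (ξ ν : Fin n → ℝ) :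
    ∃ a b c : ℝ, ξ ⬝ᵥ ξ = a ^ 2 ∧ ξ ⬝ᵥ ν = a * b ∧ ν ⬝ᵥ ν = b ^ 2 + c ^ 2 := by
  have hν : 0 ≤ ν ⬝ᵥ ν := by
    simpa [dotProduct] using Finset.sum_nonneg fun i _ => mul_self_nonneg (ν i)
  by_cases h : ξ = 0
  · exact ⟨0, 0, √(ν ⬝ᵥ ν), by simp [h], by simp [h], by simp [Real.sq_sqrt hν]⟩
  have hξ : 0 < ξ ⬝ᵥ ξ := by
    refine lt_of_le_of_ne ?_ (Ne.symm (by rwa [Ne, dotProduct_self_eq_zero]))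
    simpa [dotProduct] using Finset.sum_nonneg fun i _ => mul_self_nonneg (ξ i)
  have hcs : (ξ ⬝ᵥ ν) ^ 2 ≤ (ξ ⬝ᵥ ξ) * (ν ⬝ᵥ ν) := by
    have := Finset.sum_mul_sq_le_sq_mul_sq Finset.univ ξ ν
    simpa [dotProduct, ← sq] using this
  have ha : √(ξ ⬝ᵥ ξ) ≠ 0 := (Real.sqrt_pos.mpr hξ).ne'
  refine ⟨√(ξ ⬝ᵥ ξ), (ξ ⬝ᵥ ν) / √(ξ ⬝ᵥ ξ), √(ν ⬝ᵥ ν - (ξ ⬝ᵥ ν) ^ 2 / (ξ ⬝ᵥ ξ)),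
    (Real.sq_sqrt hξ.le).symm, ?_, ?_⟩
  · field_simp
  · rw [Real.sq_sqrt, div_pow, Real.sq_sqrt hξ.le]
    · ring
    · rw [sub_nonneg, div_le_iff₀ hξ]
      linarith

/-! ### Evaluating the action and the generators -/

/-- The three generators `Σ ξᵢ²`, `Σ ξᵢνᵢ`, `Σ νᵢ²`, as a family indexed by `Fin 3`. -/
def gramPoly (n : ℕ) : Fin 3 → MvPolynomial (Fin n ⊕ Fin n) ℝ :=
  ![∑ i : Fin n, X (Sum.inl i) ^ 2,
    ∑ i : Fin n, X (Sum.inl i) * X (Sum.inr i),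
    ∑ i : Fin n, X (Sum.inr i) ^ 2]

lemma eval_matAct {n : ℕ} (g : Matrix (Fin n) (Fin n) ℝ) (ξ ν : Fin n → ℝ)
    (F : MvPolynomial (Fin n ⊕ Fin n) ℝ) :
    eval (Sum.elim ξ ν) (matAct n g F) =
      eval (Sum.elim (g.mulVec ξ) (g.mulVec ν)) F := by
  simp only [← coe_aeval_eq_eval, RingHom.coe_coe]
  rw [matAct, ← AlgHom.comp_apply, comp_aeval]
  congr 2
  ext i
  rcases i with i | i <;> simp [Matrix.mulVec, dotProduct]

lemma aeval_gramPoly {A : Type*} [CommRing A] [Algebra ℝ A] {n : ℕ} (ξ ν : Fin n → A)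
    (G : MvPolynomial (Fin 3) ℝ) :
    aeval (Sum.elim ξ ν) (aeval (gramPoly n) G) =
      aeval ![ξ ⬝ᵥ ξ, ξ ⬝ᵥ ν, ν ⬝ᵥ ν] G := by
  rw [← AlgHom.comp_apply, comp_aeval]
  congr 2
  ext i
  fin_cases i <;> simp [gramPoly, dotProduct, sq]

/-- Two polynomials in `(ξ, ν)` that agree at all real pairs of vectors are equal. -/
lemma pair_funext {n : ℕ} {P Q : MvPolynomial (Fin n ⊕ Fin n) ℝ}
    (h : ∀ ξ ν : Fin n → ℝ, eval (Sum.elim ξ ν) P = eval (Sum.elim ξ ν) Q) : P = Q := by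
  refine MvPolynomial.funext fun x => ?_
  have := h (x ∘ Sum.inl) (x ∘ Sum.inr)
  rwa [Sum.elim_comp_inl_inr] at this

open Matrix in
lemma matAct_aeval_gramPoly {n : ℕ} {g : Matrix (Fin n) (Fin n) ℝ} (hg : g ∈ SO n)
    (G : MvPolynomial (Fin 3) ℝ) :
    matAct n g (aeval (gramPoly n) G) = aeval (gramPoly n) G := by
  refine pair_funext fun ξ ν => ?_
  rw [eval_matAct]
  simp only [← coe_aeval_eq_eval, RingHom.coe_coe]
  rw [aeval_gramPoly, aeval_gramPoly, dotProduct_mulVec_mulVec hg.1, dotProduct_mulVec_mulVec hg.1,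
    dotProduct_mulVec_mulVec hg.1]

/-! ### Clearing denominators and cancelling them -/

/-- Summing `p` over the sign changes `(a, b) ↦ (-a, -b)` and `c ↦ -c` leaves only the
monomials `aⁱ bʲ cᵏ` with `i + j` and `k` even. After multiplication by a power of `a²` these are
polynomials in `x = a²`, `y = ab`, `z = b² + c²`, because `a²c² = xz - y²`. -/
lemma exists_clear_denominators (p : MvPolynomial (Fin 3) ℝ) :
    ∃ (N : ℕ) (G : MvPolynomial (Fin 3) ℝ), ∀ a b c : ℝ,
      (a ^ 2) ^ N * (eval ![a, b, c] p + eval ![-a, -b, c] p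
        + eval ![a, b, -c] p + eval ![-a, -b, -c] p)
      = eval ![a ^ 2, a * b, b ^ 2 + c ^ 2] G := by
  induction p using MvPolynomial.induction_on' with
  | monomial u r =>
    by_cases hk : Even (u 2)
    · by_cases hij : Even (u 0 + u 1)
      · obtain ⟨k, hk⟩ := hk
        obtain ⟨m, hm⟩ := hij
        refine ⟨u 1 + k,
          C (4 * r) * X 1 ^ (u 1) * X 0 ^ m * (X 0 * X 2 - X 1 ^ 2) ^ k, fun a b c => ?_⟩
        have e1 : (-a) ^ u 0 * (-b) ^ u 1 = a ^ u 0 * b ^ u 1 := by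
          rw [neg_pow a, neg_pow b, mul_mul_mul_comm, ← pow_add, Even.neg_one_pow ⟨m, hm⟩,
            one_mul]
        have e2 : (-c) ^ u 2 = c ^ u 2 := Even.neg_pow ⟨k, hk⟩ c
        have e3 : a ^ 2 * (b ^ 2 + c ^ 2) - (a * b) ^ 2 = a ^ 2 * c ^ 2 := by ring
        have e4 : c ^ u 2 = (c ^ 2) ^ k := by rw [hk, ← pow_mul]; ring_nf
        have e5 : (a ^ 2) ^ m = a ^ u 0 * a ^ u 1 := by
          rw [← pow_add, hm, ← pow_mul]; ring_nf
        simp only [eval_monomial, Finsupp.prod_fintype, pow_zero, implies_true,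
          Fin.prod_univ_three, Matrix.cons_val, map_mul, map_pow, map_sub, eval_C, eval_X,
          e1, e2, e3, e5]
        rw [e4]
        simp only [mul_pow, pow_add]
        ring
      · refine ⟨0, 0, fun a b c => ?_⟩
        have e1 : (-a) ^ u 0 * (-b) ^ u 1 = - (a ^ u 0 * b ^ u 1) := by
          rw [neg_pow a, neg_pow b, mul_mul_mul_comm, ← pow_add,
            Odd.neg_one_pow (Nat.not_even_iff_odd.mp hij), neg_one_mul]
        simp only [eval_monomial, Finsupp.prod_fintype, pow_zero, implies_true,
          Fin.prod_univ_three, Matrix.cons_val, map_zero, e1]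
        ring
    · refine ⟨0, 0, fun a b c => ?_⟩
      have e2 : (-c) ^ u 2 = - c ^ u 2 := Odd.neg_pow (Nat.not_even_iff_odd.mp hk) c
      simp only [eval_monomial, Finsupp.prod_fintype, pow_zero, implies_true,
        Fin.prod_univ_three, Matrix.cons_val, map_zero, e2]
      ring
  | add p q hp hq =>
    obtain ⟨N, G, hG⟩ := hp
    obtain ⟨M, K, hK⟩ := hq
    refine ⟨N + M, X 0 ^ M * G + X 0 ^ N * K, fun a b c => ?_⟩
    simp only [map_add, map_mul, map_pow, eval_X, ← hG, ← hK, Matrix.cons_val]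
    ring

/-- A polynomial in three variables vanishing on the real plane `x = 0` is divisible by `x`. -/
lemma X_zero_dvd_of_eval (G : MvPolynomial (Fin 3) ℝ)
    (h : ∀ y z : ℝ, eval ![0, y, z] G = 0) : X 0 ∣ G := by
  have h0 : aeval ![0, X 1, X 2] G = (0 : MvPolynomial (Fin 3) ℝ) := by
    refine MvPolynomial.funext fun t => ?_
    rw [map_zero, ← h (t 1) (t 2)]
    simp only [← coe_aeval_eq_eval, RingHom.coe_coe]
    rw [← AlgHom.comp_apply, comp_aeval]
    congr 2
    ext i
    fin_cases i <;> simp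
  have hmod : (Ideal.Quotient.mkₐ ℝ (Ideal.span {(X 0 : MvPolynomial (Fin 3) ℝ)})).comp
      (aeval ![0, X 1, X 2]) = Ideal.Quotient.mkₐ ℝ _ := by
    refine MvPolynomial.algHom_ext fun i => ?_
    fin_cases i
    all_goals simp
  have := DFunLike.congr_fun hmod G
  rw [AlgHom.comp_apply, h0, map_zero] at this
  exact Ideal.mem_span_singleton.mp (Ideal.Quotient.eq_zero_iff_mem.mp this.symm)

/-- The factor `Σ ξᵢ²` may be cancelled inside `ℝ[Σ ξᵢ², Σ ξᵢνᵢ, Σ νᵢ²]`. The vector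
`ξ = (1, i, 0, …)` is isotropic, and together with `ν = (y, 0, w, …)`, `w² = z - y²`,
it realizes the Gram data `(0, y, z)` for arbitrary `y, z`. -/
lemma cancel_gramPoly {n : ℕ} {i₀ i₁ i₂ : Fin n} (h02 : i₀ ≠ i₂) (h12 : i₁ ≠ i₂) (h01 : i₀ ≠ i₁)
    (F : MvPolynomial (Fin n ⊕ Fin n) ℝ) (G : MvPolynomial (Fin 3) ℝ)
    (h : gramPoly n 0 * F = aeval (gramPoly n) G) :
    ∃ H : MvPolynomial (Fin 3) ℝ, F = aeval (gramPoly n) H := by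
  have hx0 : gramPoly n 0 ≠ 0 := by
    intro h0
    have := congrArg (eval (Sum.elim (Pi.single i₀ (1 : ℝ)) 0)) h0
    simp [gramPoly, Pi.single_apply] at this
  have hG : X 0 ∣ G := by
    refine X_zero_dvd_of_eval G fun y z => ?_
    obtain ⟨w, hw⟩ := IsAlgClosed.exists_pow_nat_eq ((z : ℂ) - y ^ 2) two_pos
    set ξ : Fin n → ℂ := Pi.single i₀ 1 + Pi.single i₁ Complex.I with hξ
    set ν : Fin n → ℂ := Pi.single i₀ (y : ℂ) + Pi.single i₂ w with hν
    have hxx : ξ ⬝ᵥ ξ = 0 := by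
      simp [hξ, h01, h01.symm]
    have hxy : ξ ⬝ᵥ ν = y := by
      simp [hξ, hν, h02.symm, h12.symm, h01]
    have hyy : ν ⬝ᵥ ν = z := by
      simp [hν, h02, h02.symm]
      linear_combination hw
    have key := congrArg (aeval (Sum.elim ξ ν)) h
    have hX := aeval_gramPoly ξ ν (X 0)
    rw [aeval_X, aeval_X] at hX
    rw [map_mul, aeval_gramPoly, hX, hxx, hxy, hyy] at key
    have hcast : aeval ![(0 : ℂ), y, z] G = ((eval ![0, y, z] G : ℝ) : ℂ) := by
      have := MvPolynomial.aeval_algebraMap_apply ℂ ![0, y, z] G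
      rw [← coe_aeval_eq_eval, RingHom.coe_coe]
      rw [← Complex.coe_algebraMap, ← this]
      congr 2
      ext i
      fin_cases i <;> simp
    rw [hcast] at key
    simpa using key.symm
  obtain ⟨H, rfl⟩ := hG
  refine ⟨H, mul_left_cancel₀ hx0 ?_⟩
  rw [h, map_mul, aeval_X]

/-- An invariant becomes a polynomial in the generators after multiplication by a power of
`Σ ξᵢ²`. -/
lemma exists_pow_mul_eq {n : ℕ} {i₀ i₁ i₂ : Fin n} (h02 : i₀ ≠ i₂) (h12 : i₁ ≠ i₂)
    (h01 : i₀ ≠ i₁) (F : MvPolynomial (Fin n ⊕ Fin n) ℝ) (hF : ∀ g ∈ SO n, matAct n g F = F) :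
    ∃ (N : ℕ) (G : MvPolynomial (Fin 3) ℝ), gramPoly n 0 ^ N * F = aeval (gramPoly n) G := by
  -- `p(a, b, c) = F(a e₀, b e₀ + c e₁)`
  set p : MvPolynomial (Fin 3) ℝ :=
    aeval (Sum.elim (Pi.single i₀ (X 0)) (Pi.single i₀ (X 1) + Pi.single i₁ (X 2))) F with hp
  have hpe : ∀ a b c : ℝ, eval ![a, b, c] p =
      eval (Sum.elim (Pi.single i₀ a) (Pi.single i₀ b + Pi.single i₁ c)) F := by
    intro a b c
    simp only [hp, ← coe_aeval_eq_eval, RingHom.coe_coe]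
    rw [← AlgHom.comp_apply, comp_aeval]
    congr 2
    ext i
    rcases i with i | i
    · by_cases h : i = i₀ <;> simp [h]
    · by_cases h : i = i₀ <;> by_cases h' : i = i₁ <;> simp [h, h', h01, h01.symm]
  have hval : ∀ (ξ ν : Fin n → ℝ) (a b c : ℝ), ξ ⬝ᵥ ξ = a ^ 2 → ξ ⬝ᵥ ν = a * b →
      ν ⬝ᵥ ν = b ^ 2 + c ^ 2 → eval ![a, b, c] p = eval (Sum.elim ξ ν) F := by
    intro ξ ν a b c hx hy hz
    obtain ⟨g, hg, h1, h2⟩ := exists_SO_map h02 h12 h01 ξ ν a b c hx hy hz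
    rw [hpe, ← h1, ← h2, ← eval_matAct, hF g hg]
  obtain ⟨N, G, hG⟩ := exists_clear_denominators p
  refine ⟨N, C (1 / 4) * G, pair_funext fun ξ ν => ?_⟩
  obtain ⟨a, b, c, hx, hy, hz⟩ := exists_gram_coords ξ ν
  have key := hG a b c
  rw [hval ξ ν a b c hx hy hz, hval ξ ν (-a) (-b) c (by simp [hx]) (by simp [hy]) (by simp [hz]),
    hval ξ ν a b (-c) (by simp [hx]) (by simp [hy]) (by simp [hz]),
    hval ξ ν (-a) (-b) (-c) (by simp [hx]) (by simp [hy]) (by simp [hz])] at key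
  have hev : ∀ K, eval (Sum.elim ξ ν) (aeval (gramPoly n) K)
      = eval ![a ^ 2, a * b, b ^ 2 + c ^ 2] K := by
    intro K
    have := aeval_gramPoly ξ ν K
    rwa [hx, hy, hz] at this
  have hX := hev (X 0)
  rw [aeval_X, eval_X] at hX
  rw [hev, map_mul, map_pow, hX, map_mul, eval_C, ← key]
  simp only [Matrix.cons_val]
  ring

/-- first fundamental theorem of invariant theory for the diagonal `SO(n)`
action on two copies of `ℝⁿ`: a polynomial `F ∈ ℝ[ξ,ν]` is invariant under the diagonal
`SO(n)` action iff it lies in the subalgebra generated by `Σξᵢ²`, `Σξᵢνᵢ`, `Σνᵢ²`. -/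
theorem statement18 (n : ℕ) (hn : 3 ≤ n) (F : MvPolynomial (Fin n ⊕ Fin n) ℝ) :
    (∀ g ∈ SO n, matAct n g F = F) ↔
      F ∈ Algebra.adjoin ℝ
        ({∑ i : Fin n, X (Sum.inl i) ^ 2,
          ∑ i : Fin n, X (Sum.inl i) * X (Sum.inr i),
          ∑ i : Fin n, X (Sum.inr i) ^ 2} :
          Set (MvPolynomial (Fin n ⊕ Fin n) ℝ)) := by
  have hrange : ({∑ i : Fin n, X (Sum.inl i) ^ 2,
          ∑ i : Fin n, X (Sum.inl i) * X (Sum.inr i),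
          ∑ i : Fin n, X (Sum.inr i) ^ 2} :
          Set (MvPolynomial (Fin n ⊕ Fin n) ℝ)) = Set.range (gramPoly n) := by
    ext P
    simp [gramPoly]
    tauto
  rw [hrange, Algebra.adjoin_range_eq_range_aeval, AlgHom.mem_range]
  constructor
  · intro hF
    have h02 : (⟨0, by lia⟩ : Fin n) ≠ ⟨2, by lia⟩ := by simp
    have h12 : (⟨1, by lia⟩ : Fin n) ≠ ⟨2, by lia⟩ := by simp
    have h01 : (⟨0, by lia⟩ : Fin n) ≠ ⟨1, by lia⟩ := by simp
    obtain ⟨N, G, hG⟩ := exists_pow_mul_eq h02 h12 h01 F hF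
    clear hF
    induction N generalizing G with
    | zero => exact ⟨G, by simpa using hG.symm⟩
    | succ N ih =>
      rw [pow_succ', mul_assoc] at hG
      obtain ⟨H, hH⟩ := cancel_gramPoly h02 h12 h01 _ G hG
      exact ih H hH
  · rintro ⟨G, rfl⟩ g hg
    exact matAct_aeval_gramPoly hg G

end
end
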